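/- Let q ≥ 2 be an integer and 0 < H < 1 − 1/(2q). Then there exists a constant c_{1,q,H} > 0 (depending only on q and H) such that V_n/(c_{1,q,H} √n) converges in distribution, as n → ∞, to a standard normal random variable. -/

import Mathlib

open MeasureTheory ProbabilityTheory Filter Real Topology

/-- A (centered) fractional Brownian motion with Hurst parameter `H`:
all finite-dimensional distributions are centered Gaussian (equivalently, every finite
linear combination of values of the process is a centered real Gaussian), with covariance
`E (B s * B t) = (s^(2H) + t^(2H) - |t-s|^(2H)) / 2` for nonnegative times. -/
structure IsFractionalBrownianMotion {Ω : Type*} [MeasureSpace Ω]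
    (B : ℝ → Ω → ℝ) (H : ℝ) : Prop where
  measurable : ∀ t : ℝ, Measurable (B t)
  gaussian_fdd : ∀ (n : ℕ) (t : Fin n → ℝ), (∀ i, 0 ≤ t i) → ∀ c : Fin n → ℝ,
    ∃ v : NNReal,
      Measure.map (fun ω => ∑ i, c i * B (t i) ω) (ℙ : Measure Ω) = gaussianReal 0 v
  covariance : ∀ s t : ℝ, 0 ≤ s → 0 ≤ t →
    ∫ ω, B s ω * B t ω ∂(ℙ : Measure Ω)
      = (s ^ (2 * H) + t ^ (2 * H) - |t - s| ^ (2 * H)) / 2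

/-- `V_n = ∑_{k=0}^{n-1} H_q (n^H (B_{(k+1)/n} - B_{k/n}))`, where `H_q` is the Hermite
polynomial of degree `q`. -/
noncomputable def hermiteVariation {Ω : Type*} [MeasureSpace Ω]
    (B : ℝ → Ω → ℝ) (H : ℝ) (q n : ℕ) (ω : Ω) : ℝ :=
  ∑ k ∈ Finset.range n,
    Polynomial.aeval
      ((n : ℝ) ^ H * (B (((k : ℝ) + 1) / n) ω - B ((k : ℝ) / n) ω))
      (Polynomial.hermite q)

/-- Convergence in distribution of a sequence of real random variables to a law `μ`. -/
def TendstoInDistribution {Ω : Type*} [MeasureSpace Ω]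
    (Z : ℕ → Ω → ℝ) (μ : Measure ℝ) : Prop :=
  ∀ f : BoundedContinuousFunction ℝ ℝ,
    Tendsto (fun n => ∫ ω, f (Z n ω) ∂(ℙ : Measure Ω)) atTop (𝓝 (∫ x, f x ∂μ))

/-!
The normalized increments `Xₖ = n ^ H (B_{(k+1)/n} - B_{k/n})` form a standard Gaussian family with
stationary covariances `𝔼[Xᵢ Xⱼ] = ρ(i - j)`, and `ρ(z) = O(|z| ^ (2H - 2))`, so that
`∑ |ρ| ^ q < ∞` because `H < 1 - 1/(2q)`. Gaussian integration by parts gives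
`𝔼[V f(V)] = 𝔼[Γ f'(V)]` for `V = ∑ᵢ H_q(Xᵢ)` and `Γ = q ∑ᵢⱼ ρ(i - j) H_{q-1}(Xᵢ) H_{q-1}(Xⱼ)`.
For characters `f`, and once `Γ / n` is close in `L²` to a constant `σ²`, this is nearly the
differential equation `φ' = -σ² t φ` for the characteristic function `φ` of `V / √n`. The mean of
`Γ / n` converges to `σ² = q! ∑ ρ ^ q`. Its variance is `n⁻²` times a sum of covariances of
products of two Hermite polynomials: by Wick's recursion these are bounded by products of `|ρ|` over
the pairings that connect the two pairs of indices, and for such pairings `∑ |ρ| ^ q < ∞` makes the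
sum over the four indices `o(n²)`.
-/

namespace BreuerMajor

section GaussianIntegrationByParts

variable {F : Type*} [NormedAddCommGroup F] [NormedSpace ℝ F]

lemma hasDerivAt_gaussianPDFReal (μ : ℝ) (v : NNReal) (x : ℝ) :
    HasDerivAt (gaussianPDFReal μ v) (-((x - μ) / v) * gaussianPDFReal μ v x) x := by
  have h : HasDerivAt (fun x : ℝ => (√(2 * π * v))⁻¹ * rexp (-(x - μ) ^ 2 / (2 * v)))
      ((√(2 * π * v))⁻¹ *
        (rexp (-(x - μ) ^ 2 / (2 * v)) * (-(2 * (x - μ) ^ (2 - 1) * 1) / (2 * v)))) x :=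
    (((((hasDerivAt_id x).sub_const μ).pow 2).neg.div_const _).exp).const_mul _
  rw [gaussianPDFReal_def]
  convert h using 1
  ring

lemma integrable_gaussianReal_iff {μ : ℝ} {v : NNReal} (hv : v ≠ 0) {f : ℝ → F} :
    Integrable f (gaussianReal μ v) ↔ Integrable (fun x => gaussianPDFReal μ v x • f x) := by
  rw [gaussianReal_of_var_ne_zero _ hv,
    integrable_withDensity_iff_integrable_smul₀' (by fun_prop) (by simp [gaussianPDF_lt_top])]
  simp [toReal_gaussianPDF]

theorem integral_sub_smul_gaussianReal [CompleteSpace F] {μ : ℝ} {v : NNReal} {f f' : ℝ → F}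
    (hf : ∀ x, HasDerivAt f (f' x) x) (hfi : Integrable f (gaussianReal μ v))
    (hxf : Integrable (fun x => (x - μ) • f x) (gaussianReal μ v))
    (hf' : Integrable f' (gaussianReal μ v)) :
    ∫ x, (x - μ) • f x ∂(gaussianReal μ v) = (v : ℝ) • ∫ x, f' x ∂(gaussianReal μ v) := by
  rcases eq_or_ne v 0 with rfl | hv
  · simp [gaussianReal_zero_var]
  rw [integrable_gaussianReal_iff hv] at hfi hxf hf'
  have hv' : (v : ℝ) ≠ 0 := mod_cast hv
  have h := integral_bilinear_hasDerivAt_right_eq_neg_left_of_integrable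
    (L := ContinuousLinearMap.lsmul ℝ ℝ) (fun x _ => hasDerivAt_gaussianPDFReal μ v x)
    (fun x _ => hf x) hf'
    ((hxf.smul (-(v : ℝ)⁻¹)).congr (ae_of_all _ fun x => by
      simp [smul_smul]; ring_nf)) hfi
  simp only [ContinuousLinearMap.lsmul_apply] at h
  rw [integral_gaussianReal_eq_integral_smul hv, integral_gaussianReal_eq_integral_smul hv, h,
    ← integral_neg, ← integral_smul]
  congr with x
  rw [← neg_smul, smul_smul, smul_smul]
  congr 1
  field_simp

variable {Ω : Type*} [MeasurableSpace Ω] {P : Measure Ω} [IsProbabilityMeasure P]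

lemma integral_sub_smul_of_indepFun [CompleteSpace F] {E : Type*} [MeasurableSpace E]
    {μ : ℝ} {v : NNReal} {ξ : Ω → ℝ} {W : Ω → E}
    (hξ : HasLaw ξ (gaussianReal μ v) P) (hW : AEMeasurable W P) (hind : IndepFun ξ W P)
    {g g' : ℝ × E → F} (hg : StronglyMeasurable g) (hg' : StronglyMeasurable g')
    (hd : ∀ x w, HasDerivAt (fun x => g (x, w)) (g' (x, w)) x)
    (hgi : Integrable (fun ω => g (ξ ω, W ω)) P)
    (hxg : Integrable (fun ω => (ξ ω - μ) • g (ξ ω, W ω)) P)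
    (hg'i : Integrable (fun ω => g' (ξ ω, W ω)) P) :
    ∫ ω, (ξ ω - μ) • g (ξ ω, W ω) ∂P = (v : ℝ) • ∫ ω, g' (ξ ω, W ω) ∂P := by
  have hmap : P.map (fun ω => (ξ ω, W ω)) = (gaussianReal μ v).prod (P.map W) :=
    hξ.map_eq ▸ (indepFun_iff_map_prod_eq_prod_map_map hξ.aemeasurable hW).1 hind
  have hm : AEMeasurable (fun ω => (ξ ω, W ω)) P := hξ.aemeasurable.prodMk hW
  have : IsProbabilityMeasure (P.map W) := Measure.isProbabilityMeasure_map hW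
  have transfer : ∀ f : ℝ × E → F, StronglyMeasurable f → Integrable (fun ω => f (ξ ω, W ω)) P →
      Integrable f ((gaussianReal μ v).prod (P.map W)) ∧
      ∫ ω, f (ξ ω, W ω) ∂P = ∫ w, ∫ x, f (x, w) ∂(gaussianReal μ v) ∂(P.map W) := by
    intro f hf hfi
    have hfp : Integrable f ((gaussianReal μ v).prod (P.map W)) :=
      hmap ▸ (integrable_map_measure hf.aestronglyMeasurable hm).2 hfi
    refine ⟨hfp, ?_⟩
    rw [← integral_map hm (f := f) hf.aestronglyMeasurable, hmap, integral_prod_symm _ hfp]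
  obtain ⟨hgp, -⟩ := transfer g hg hgi
  obtain ⟨hxgp, hxg_eq⟩ := transfer (fun z => (z.1 - μ) • g z)
    ((measurable_fst.sub_const μ).stronglyMeasurable.smul hg) hxg
  obtain ⟨hg'p, hg'_eq⟩ := transfer g' hg' hg'i
  rw [hxg_eq, hg'_eq, ← integral_smul]
  refine integral_congr_ae ?_
  filter_upwards [hgp.prod_left_ae, hxgp.prod_left_ae, hg'p.prod_left_ae] with w h h' h''
  exact integral_sub_smul_gaussianReal (fun x => hd x w) h h' h''

lemma covariance_sub_smul_eq_zero {X Y : Ω → ℝ} (hX : MemLp X 2 P) (hY : MemLp Y 2 P)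
    (h : Var[X; P] ≠ 0) : cov[X, Y - (Var[X; P]⁻¹ * cov[X, Y; P]) • X; P] = 0 := by
  rw [covariance_sub_right hX hY (hX.const_smul _), covariance_smul_right,
    covariance_self hX.aemeasurable]
  field_simp
  simp

lemma indepFun_sub_smul {ι : Type*} [Finite ι] {X : ι → Ω → ℝ}
    (hX : HasGaussianLaw (fun ω i => X i ω) P) (k : ι) (h : Var[X k; P] ≠ 0) :
    IndepFun (X k)
      (fun ω i => X i ω - Var[X k; P]⁻¹ * cov[X k, X i; P] * X k ω) P := by
  have := Fintype.ofFinite ι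
  have hL2 : ∀ i, MemLp (X i) 2 P := fun i => (hX.eval i).memLp_two
  let c : ι → ℝ := fun i => Var[X k; P]⁻¹ * cov[X k, X i; P]
  let T : (ι → ℝ) →L[ℝ] (Unit → ℝ) × (ι → ℝ) :=
    (ContinuousLinearMap.pi fun _ => ContinuousLinearMap.proj k).prod
      (ContinuousLinearMap.pi fun i =>
        ContinuousLinearMap.proj i - c i • ContinuousLinearMap.proj k)
  have hind : IndepFun (fun ω (_ : Unit) => X k ω) (fun ω i => X i ω - c i * X k ω) P :=
    HasGaussianLaw.indepFun_of_covariance_eval (X := fun _ => X k)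
      (Y := fun i ω => X i ω - c i * X k ω) (hX.map_fun T)
      fun _ i => covariance_sub_smul_eq_zero (hL2 k) (hL2 i) h
  exact hind.comp (measurable_pi_apply ()) measurable_id

lemma hasDerivAt_add_smul {E : Type*} [AddCommGroup E] [Module ℝ E] {f : E → F} {f' : F}
    {w v : E} {x : ℝ} (h : HasLineDerivAt ℝ f f' (w + x • v) v) :
    HasDerivAt (fun t : ℝ => f (w + t • v)) f' x := by
  have h' := HasDerivAt.comp_sub_const x x (f := fun t : ℝ => f (w + x • v + t • v))
    (by rw [sub_self]; exact h)
  refine h'.congr_of_eventuallyEq (.of_eq (funext fun t => ?_))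
  rw [add_assoc, ← add_smul, add_sub_cancel]

theorem integral_sub_smul_of_hasGaussianLaw [CompleteSpace F] {ι : Type*} [Finite ι]
    {X : ι → Ω → ℝ} (hX : HasGaussianLaw (fun ω i => X i ω) P) (k : ι) {G G' : (ι → ℝ) → F}
    (hG : StronglyMeasurable G) (hG' : StronglyMeasurable G')
    (hd : ∀ y, HasLineDerivAt ℝ G (G' y) y (fun i => cov[X k, X i; P]))
    (hGi : Integrable (fun ω => G (fun i => X i ω)) P)
    (hxG : Integrable (fun ω => (X k ω - P[X k]) • G (fun i => X i ω)) P)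
    (hG'i : Integrable (fun ω => G' (fun i => X i ω)) P) :
    ∫ ω, (X k ω - P[X k]) • G (fun i => X i ω) ∂P = ∫ ω, G' (fun i => X i ω) ∂P := by
  have hXm : ∀ i, AEMeasurable (X i) P := fun i => (hX.eval i).aemeasurable
  rcases eq_or_ne Var[X k; P] 0 with hv | hv
  · have hX0 : ∀ᵐ ω ∂P, X k ω - P[X k] = 0 :=
      (ae_eq_integral_of_variance_eq_zero (hX.eval k).memLp_two hv).mono fun ω h => sub_eq_zero.2 h
    have hcov : (fun i => cov[X k, X i; P]) = 0 := by
      ext i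
      exact integral_eq_zero_of_ae (hX0.mono fun ω h => by simp [h])
    have hG'0 : ∀ y, G' y = 0 := fun y => (hcov ▸ hd y).unique hasLineDerivAt_zero
    rw [integral_eq_zero_of_ae (hX0.mono fun ω h => by simp [h])]
    simp [hG'0]
  set c : ι → ℝ := fun i => Var[X k; P]⁻¹ * cov[X k, X i; P]
  have hind : IndepFun (X k) (fun ω i => X i ω - c i * X k ω) P := indepFun_sub_smul hX k hv
  have split : ∀ ω, (fun i => X i ω) = (fun i => X i ω - c i * X k ω) + X k ω • c := fun ω => by
    ext i; simp; ring
  have hdc : ∀ y, HasLineDerivAt ℝ G (Var[X k; P]⁻¹ • G' y) y c := fun y => (hd y).smul _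
  have hmap : Measurable fun z : ℝ × (ι → ℝ) => z.2 + z.1 • c := by fun_prop
  have h := integral_sub_smul_of_indepFun
    ⟨(hX.eval k).aemeasurable, (hX.eval k).map_eq_gaussianReal⟩
    (aemeasurable_pi_lambda _ fun i => by fun_prop) hind
    (g := fun z => G (z.2 + z.1 • c)) (g' := fun z => Var[X k; P]⁻¹ • G' (z.2 + z.1 • c))
    (hG.comp_measurable hmap) ((hG'.comp_measurable hmap).const_smul _)
    (fun x w => hasDerivAt_add_smul (hdc (w + x • c)))
    (by simpa only [← split] using hGi) (by simpa only [← split] using hxG)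
    (by simp only [← split]; exact hG'i.smul _)
  simp only [← split, integral_smul] at h
  rw [h, smul_smul, Real.coe_toNNReal _ (variance_nonneg _ _), mul_inv_cancel₀ hv, one_smul]

end GaussianIntegrationByParts

/-- All moments of `f` are finite: a class of integrands that, unlike `L²`, is stable under
products. -/
def HasFiniteMoments {Ω F : Type*} [MeasurableSpace Ω] [NormedAddCommGroup F]
    (f : Ω → F) (P : Measure Ω) : Prop :=
  ∀ p : ℕ, MemLp f p P

namespace HasFiniteMoments

variable {Ω : Type*} [MeasurableSpace Ω] {P : Measure Ω}
  {F : Type*} [NormedAddCommGroup F] {f g : Ω → ℝ}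

lemma integrable {f : Ω → F} (hf : HasFiniteMoments f P) : Integrable f P :=
  memLp_one_iff_integrable.1 (by simpa using hf 1)

lemma memLp_two {f : Ω → F} (hf : HasFiniteMoments f P) : MemLp f 2 P :=
  hf 2

lemma add {f g : Ω → F} (hf : HasFiniteMoments f P) (hg : HasFiniteMoments g P) :
    HasFiniteMoments (fun ω => f ω + g ω) P :=
  fun p => (hf p).add (hg p)

lemma sum {κ : Type*} (s : Finset κ) {f : κ → Ω → F} (hf : ∀ i ∈ s, HasFiniteMoments (f i) P) :
    HasFiniteMoments (fun ω => ∑ i ∈ s, f i ω) P :=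
  fun p => memLp_finsetSum s fun i hi => hf i hi p

lemma const [IsFiniteMeasure P] (c : F) : HasFiniteMoments (fun _ : Ω => c) P :=
  fun _ => memLp_const c

lemma smul [NormedSpace ℝ F] {g : Ω → F} (hf : HasFiniteMoments f P)
    (hg : HasFiniteMoments g P) : HasFiniteMoments (fun ω => f ω • g ω) P := fun p => by
  have : ENNReal.HolderTriple ((2 * p : ℕ) : ENNReal) ((2 * p : ℕ) : ENNReal) p := by
    constructor
    push_cast
    rw [ENNReal.mul_inv (by simp) (by simp), ← add_mul, ENNReal.inv_two_add_inv_two, one_mul]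
  exact (hg (2 * p)).smul (hf (2 * p))

lemma mul (hf : HasFiniteMoments f P) (hg : HasFiniteMoments g P) :
    HasFiniteMoments (fun ω => f ω * g ω) P :=
  hf.smul hg

lemma const_mul (hf : HasFiniteMoments f P) (c : ℝ) : HasFiniteMoments (fun ω => c * f ω) P :=
  fun p => (hf p).const_mul c

lemma prod [IsFiniteMeasure P] {κ : Type*} (s : Finset κ) {f : κ → Ω → ℝ}
    (hf : ∀ i ∈ s, HasFiniteMoments (f i) P) :
    HasFiniteMoments (fun ω => ∏ i ∈ s, f i ω) P := by
  induction s using Finset.cons_induction with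
  | empty => simpa using const (P := P) (1 : ℝ)
  | cons i s hi ih =>
    simp only [Finset.prod_cons]
    exact (hf i (by simp)).mul (ih fun j hj => hf j (by simp [hj]))

lemma pow [IsFiniteMeasure P] (hf : HasFiniteMoments f P) (n : ℕ) :
    HasFiniteMoments (fun ω => f ω ^ n) P := by
  simpa using prod (Finset.range n) fun _ _ => hf

lemma aeval [IsFiniteMeasure P] (hf : HasFiniteMoments f P) (p : Polynomial ℤ) :
    HasFiniteMoments (fun ω => Polynomial.aeval (f ω) p) P := by
  simp only [Polynomial.aeval_eq_sum_range, zsmul_eq_mul]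
  exact sum _ fun i _ => (hf.pow i).const_mul _

end HasFiniteMoments

section Hermite

/-- The real function of the (probabilists') Hermite polynomial of degree `n`. -/
noncomputable def hermiteFun (n : ℕ) (x : ℝ) : ℝ :=
  Polynomial.aeval x (Polynomial.hermite n)

@[simp]
lemma hermiteFun_zero (x : ℝ) : hermiteFun 0 x = 1 := by
  simp [hermiteFun]

lemma derivative_hermite (n : ℕ) : Polynomial.derivative (Polynomial.hermite n) =
    (n : Polynomial ℤ) * Polynomial.hermite (n - 1) := by
  induction n with
  | zero => simp
  | succ n ih =>
    rw [Polynomial.hermite_succ, Polynomial.derivative_sub, Polynomial.derivative_mul,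
      Polynomial.derivative_X, ih]
    cases n with
    | zero => simp
    | succ m =>
      simp only [Nat.add_sub_cancel, Polynomial.derivative_mul, Polynomial.derivative_natCast]
      rw [Polynomial.hermite_succ m]
      push_cast
      ring

lemma hermiteFun_succ (n : ℕ) (x : ℝ) :
    hermiteFun (n + 1) x = x * hermiteFun n x - n * hermiteFun (n - 1) x := by
  simp [hermiteFun, Polynomial.hermite_succ, derivative_hermite]

lemma hasDerivAt_hermiteFun (n : ℕ) (x : ℝ) :
    HasDerivAt (hermiteFun n) (n * hermiteFun (n - 1) x) x := by
  have h := (Polynomial.hermite n).hasDerivAt_aeval (x := x)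
  rw [derivative_hermite, map_mul, map_natCast] at h
  exact h

@[fun_prop]
lemma continuous_hermiteFun (n : ℕ) : Continuous (hermiteFun n) :=
  continuous_iff_continuousAt.2 fun x => (hasDerivAt_hermiteFun n x).continuousAt

lemma hasLineDerivAt_hermiteFun_apply {ι : Type*} (n : ℕ) (i : ι) (y v : ι → ℝ) :
    HasLineDerivAt ℝ (fun y : ι → ℝ => hermiteFun n (y i)) (n * hermiteFun (n - 1) (y i) * v i)
      y v := by
  have h : HasDerivAt (fun t : ℝ => (y + t • v) i) (v i) 0 := by
    simpa using ((hasDerivAt_id (0 : ℝ)).mul_const (v i)).const_add (y i)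
  exact HasDerivAt.comp (h₂ := hermiteFun n) 0 (by simpa using hasDerivAt_hermiteFun n (y i)) h

end Hermite

/-- `X` is a finite centred Gaussian family with unit variances and covariance matrix `ρ`. -/
structure IsStandardGaussianFamily {Ω ι : Type*} [MeasurableSpace Ω] [Finite ι]
    (X : ι → Ω → ℝ) (ρ : ι → ι → ℝ) (P : Measure Ω) : Prop where
  hasGaussianLaw : HasGaussianLaw (fun ω i => X i ω) P
  integral_eq_zero : ∀ i, P[X i] = 0
  covariance_eq : ∀ i j, cov[X i, X j; P] = ρ i j
  self_eq_one : ∀ i, ρ i i = 1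

namespace IsStandardGaussianFamily

variable {Ω ι κ : Type*} [MeasurableSpace Ω] {P : Measure Ω}
  [Finite ι] [Finite κ] {X : ι → Ω → ℝ} {ρ : ι → ι → ℝ}

lemma comp (h : IsStandardGaussianFamily X ρ P) (f : κ → ι) :
    IsStandardGaussianFamily (fun k => X (f k)) (fun k l => ρ (f k) (f l)) P where
  hasGaussianLaw := by
    have := Fintype.ofFinite ι
    have := Fintype.ofFinite κ
    let T : (ι → ℝ) →L[ℝ] (κ → ℝ) := .pi fun k => .proj (f k)
    exact h.hasGaussianLaw.map_fun T
  integral_eq_zero k := h.integral_eq_zero (f k)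
  covariance_eq k l := h.covariance_eq (f k) (f l)
  self_eq_one k := h.self_eq_one (f k)

lemma symm (h : IsStandardGaussianFamily X ρ P) (i j : ι) : ρ i j = ρ j i := by
  rw [← h.covariance_eq, ← h.covariance_eq, covariance_comm]

lemma hasFiniteMoments (h : IsStandardGaussianFamily X ρ P) (i : ι) :
    HasFiniteMoments (X i) P :=
  have := Fintype.ofFinite ι
  fun _ => (h.hasGaussianLaw.eval i).memLp (by simp)

variable [IsProbabilityMeasure P]

lemma hasFiniteMoments_hermiteFun (h : IsStandardGaussianFamily X ρ P) (i : ι) (n : ℕ) :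
    HasFiniteMoments (fun ω => hermiteFun n (X i ω)) P :=
  (h.hasFiniteMoments i).aeval _

variable {F : Type*} [NormedAddCommGroup F] [NormedSpace ℝ F] [CompleteSpace F]
  {G G' : (ι → ℝ) → F}

theorem integral_smul_eq (h : IsStandardGaussianFamily X ρ P) (k : ι)
    (hG : Continuous G) (hG' : Continuous G') (hd : ∀ y, HasLineDerivAt ℝ G (G' y) y (ρ k))
    (hGm : HasFiniteMoments (fun ω => G (fun i => X i ω)) P)
    (hG'm : HasFiniteMoments (fun ω => G' (fun i => X i ω)) P) :
    ∫ ω, X k ω • G (fun i => X i ω) ∂P = ∫ ω, G' (fun i => X i ω) ∂P := by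
  have hρ : (fun i => cov[X k, X i; P]) = ρ k := funext (h.covariance_eq k)
  have := integral_sub_smul_of_hasGaussianLaw h.hasGaussianLaw k hG.stronglyMeasurable
    hG'.stronglyMeasurable (by rwa [hρ]) hGm.integrable
    (by simpa only [h.integral_eq_zero, sub_zero] using
      ((h.hasFiniteMoments k).smul hGm).integrable) hG'm.integrable
  simpa only [h.integral_eq_zero, sub_zero] using this

-- The term produced by differentiating `hermiteFun n (y k)` is the second one in the Hermite
-- recursion, since the direction `ρ k` has `k`-th coordinate `1`.
theorem integral_hermiteFun_succ_smul (h : IsStandardGaussianFamily X ρ P) (k : ι) (n : ℕ)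
    (hG : Continuous G) (hG' : Continuous G') (hd : ∀ y, HasLineDerivAt ℝ G (G' y) y (ρ k))
    (hGm : HasFiniteMoments (fun ω => G (fun i => X i ω)) P)
    (hG'm : HasFiniteMoments (fun ω => G' (fun i => X i ω)) P) :
    ∫ ω, hermiteFun (n + 1) (X k ω) • G (fun i => X i ω) ∂P
      = ∫ ω, hermiteFun n (X k ω) • G' (fun i => X i ω) ∂P := by
  have hH := h.hasFiniteMoments_hermiteFun k
  have hHG := (hH n).smul hGm
  have hHG' := (hH n).smul hG'm
  have hdHG := ((hH (n - 1)).const_mul n).smul hGm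
  have hd' : ∀ y, HasLineDerivAt ℝ (fun y => hermiteFun n (y k) • G y)
      (hermiteFun n (y k) • G' y + (n * hermiteFun (n - 1) (y k)) • G y) y (ρ k) := fun y => by
    have := HasDerivAt.fun_smul (hasLineDerivAt_hermiteFun_apply n k y (ρ k)) (hd y)
    simpa [HasLineDerivAt, h.self_eq_one] using this
  have ibp := h.integral_smul_eq k (by fun_prop) (by fun_prop) hd' hHG (hHG'.add hdHG)
  rw [integral_add hHG'.integrable hdHG.integrable, ← sub_eq_iff_eq_add, ← integral_sub
    ((h.hasFiniteMoments k).smul hHG).integrable hdHG.integrable] at ibp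
  rw [← ibp]
  congr with ω
  rw [hermiteFun_succ, sub_smul, smul_smul]

end IsStandardGaussianFamily

section Wick

lemma sub_single_add_single {ι : Type*} [DecidableEq ι] {a : ι → ℕ} {j : ι} (h : a j ≠ 0) :
    a - Pi.single j 1 + Pi.single j 1 = a :=
  tsub_add_cancel_of_le fun i => by
    rcases eq_or_ne i j with rfl | hij
    · simpa using Nat.one_le_iff_ne_zero.2 h
    · simp [hij]

variable {ι κ : Type*} [Fintype ι] [DecidableEq ι] [Fintype κ] [DecidableEq κ]

/-- The Wick recursion for a family `M` of numbers indexed by multi-indices: one factor `k` is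
paired in all possible ways with the other factors, a pairing of `k` with `j` contributing `R k j`.
The truncated subtraction is harmless, as it comes with the factor `a j`. -/
structure IsWickFamily (R : Matrix ι ι ℝ) (M : (ι → ℕ) → ℝ) : Prop where
  zero : M 0 = 1
  add_single : ∀ (a : ι → ℕ) (k : ι),
    M (a + Pi.single k 1) = ∑ j, R k j * (a j * M (a - Pi.single j 1))

/-- The multidegree of an edge of a multigraph with vertex set `ι`. It is the weight for which the
polynomials computing Wick families are homogeneous. -/
def edgeDegree (e : ι × ι) : ι → ℕ :=
  Pi.single e.1 1 + Pi.single e.2 1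

open MvPolynomial in
theorem exists_isWeightedHomogeneous_eval_eq (a : ι → ℕ) :
    ∃ W : MvPolynomial (ι × ι) ℝ, IsWeightedHomogeneous edgeDegree W a ∧
      ∀ (R : Matrix ι ι ℝ) (M : (ι → ℕ) → ℝ), IsWickFamily R M →
        M a = eval (fun e => R e.1 e.2) W := by
  induction hn : ∑ i, a i using Nat.strong_induction_on generalizing a with
  | _ n ih =>
  rcases eq_or_ne a 0 with rfl | ha
  · exact ⟨1, isWeightedHomogeneous_one _ _, fun R M h => by simp [h.zero]⟩
  obtain ⟨k, hk⟩ := Function.ne_iff.1 ha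
  let b := a - Pi.single k 1
  have hab : b + Pi.single k 1 = a := sub_single_add_single hk
  have hbn : ∑ i, b i < n := by
    rw [← hn, ← hab]
    simp [Finset.sum_add_distrib]
  choose W hW hWM using fun j => ih _
    ((Finset.sum_le_sum fun i _ => Nat.sub_le (b i) ((Pi.single j 1 : ι → ℕ) i)).trans_lt hbn)
    (b - Pi.single j 1) rfl
  refine ⟨∑ j, X (k, j) * (C (b j : ℝ) * W j), .sum _ _ _ fun j _ => ?_, fun R M h => ?_⟩
  · rcases eq_or_ne (b j) 0 with hj | hj
    · simpa [hj] using isWeightedHomogeneous_zero ℝ _ a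
    · have hX := isWeightedHomogeneous_X ℝ (edgeDegree (ι := ι)) (k, j)
      convert hX.mul ((hW j).C_mul (b j : ℝ)) using 1
      rw [← hab, edgeDegree, add_assoc, add_comm (Pi.single j 1), sub_single_add_single hj,
        add_comm]
  · rw [← hab, h.add_single]
    simp [hWM _ R M h]

lemma IsWickFamily.mul_fromBlocks {R : Matrix ι ι ℝ} {S : Matrix κ κ ℝ} {M : (ι → ℕ) → ℝ}
    {N : (κ → ℕ) → ℝ} (hM : IsWickFamily R M) (hN : IsWickFamily S N) :
    IsWickFamily (Matrix.fromBlocks R 0 0 S) fun a => M (a ∘ Sum.inl) * N (a ∘ Sum.inr) where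
  zero := by simp [Function.comp_def, ← Pi.zero_def, hM.zero, hN.zero]
  add_single a k := by
    have inl_inl (i : ι) : (Pi.single (Sum.inl i) 1 : ι ⊕ κ → ℕ) ∘ Sum.inl = Pi.single i 1 := by
      ext j; simp [Pi.single_apply]
    have inl_inr (i : ι) : (Pi.single (Sum.inl i) 1 : ι ⊕ κ → ℕ) ∘ Sum.inr = 0 := by
      ext j; simp
    have inr_inl (i : κ) : (Pi.single (Sum.inr i) 1 : ι ⊕ κ → ℕ) ∘ Sum.inl = 0 := by
      ext j; simp
    have inr_inr (i : κ) : (Pi.single (Sum.inr i) 1 : ι ⊕ κ → ℕ) ∘ Sum.inr = Pi.single i 1 := by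
      ext j; simp [Pi.single_apply]
    cases k with
    | inl k =>
      simp [Pi.add_comp, Pi.sub_comp, inl_inl, inl_inr, hM.add_single, Finset.sum_mul, mul_assoc]
    | inr k =>
      simp [Pi.add_comp, Pi.sub_comp, inr_inl, inr_inr, hN.add_single, Finset.mul_sum,
        mul_left_comm]

open MvPolynomial in
lemma abs_eval_sub_eval_le {σ : Type*} (W : MvPolynomial σ ℝ) {x y : σ → ℝ} {T : ℝ}
    (h : ∀ m ∈ W.support, |(m.prod fun e n => x e ^ n) - m.prod fun e n => y e ^ n| ≤ T) :
    |eval x W - eval y W| ≤ (∑ m ∈ W.support, |coeff m W|) * T := by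
  rw [eval_eq, eval_eq, ← Finset.sum_sub_distrib, Finset.sum_mul]
  refine (Finset.abs_sum_le_sum_abs _ _).trans (Finset.sum_le_sum fun m hm => ?_)
  rw [← mul_sub, abs_mul]
  exact mul_le_mul_of_nonneg_left (h m hm) (abs_nonneg _)

theorem exists_abs_sub_mul_le (a : ι ⊕ κ → ℕ) : ∃ C : ℝ, 0 ≤ C ∧
    ∀ (R : Matrix (ι ⊕ κ) (ι ⊕ κ) ℝ) (M : (ι ⊕ κ → ℕ) → ℝ) (N₁ : (ι → ℕ) → ℝ) (N₂ : (κ → ℕ) → ℝ)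
      (T : ℝ), IsWickFamily R M → IsWickFamily R.toBlocks₁₁ N₁ → IsWickFamily R.toBlocks₂₂ N₂ →
      0 ≤ T →
      (∀ m : (ι ⊕ κ) × (ι ⊕ κ) →₀ ℕ, Finsupp.weight edgeDegree m = a →
        (∃ e ∈ m.support, e.1.isLeft ≠ e.2.isLeft) → |m.prod fun e n => R e.1 e.2 ^ n| ≤ T) →
      |M a - N₁ (a ∘ Sum.inl) * N₂ (a ∘ Sum.inr)| ≤ C * T := by
  obtain ⟨W, hW, hWM⟩ := exists_isWeightedHomogeneous_eval_eq a
  refine ⟨∑ m ∈ W.support, |MvPolynomial.coeff m W|, Finset.sum_nonneg fun _ _ => abs_nonneg _,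
    fun R M N₁ N₂ T hM hN₁ hN₂ hT hcross => ?_⟩
  rw [hWM R M hM, hWM _ _ (hN₁.mul_fromBlocks hN₂)]
  refine abs_eval_sub_eval_le W fun m hm => ?_
  by_cases h : ∃ e ∈ m.support, e.1.isLeft ≠ e.2.isLeft
  · have h0 : (m.prod fun e n =>
        Matrix.fromBlocks R.toBlocks₁₁ 0 0 R.toBlocks₂₂ e.1 e.2 ^ n) = 0 := by
      obtain ⟨⟨i, j⟩, hm, hij⟩ := h
      refine Finset.prod_eq_zero hm ?_
      rw [Finsupp.mem_support_iff] at hm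
      rcases i with i | i <;> rcases j with j | j <;> simp_all
    rw [h0, sub_zero]
    exact hcross m (hW (MvPolynomial.mem_support_iff.1 hm)) h
  · push Not at h
    have heq : (m.prod fun e n => R e.1 e.2 ^ n) = m.prod fun e n =>
        Matrix.fromBlocks R.toBlocks₁₁ 0 0 R.toBlocks₂₂ e.1 e.2 ^ n := by
      refine Finsupp.prod_congr fun e he => ?_
      obtain ⟨i | i, j | j⟩ := e
      all_goals simp_all [Matrix.toBlocks₁₁, Matrix.toBlocks₂₂]
    rwa [heq, sub_self, abs_zero]

end Wick

section HermiteMoments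

variable {ι : Type*} [Fintype ι]

/-- The product of the Hermite polynomials of degrees `a i` in the variables `y i`, whose Gaussian
expectation is a mixed Hermite moment. -/
noncomputable def hermiteProd (a : ι → ℕ) (y : ι → ℝ) : ℝ :=
  ∏ i, hermiteFun (a i) (y i)

@[fun_prop]
lemma continuous_hermiteProd (a : ι → ℕ) : Continuous (hermiteProd a) := by
  unfold hermiteProd
  fun_prop

lemma IsStandardGaussianFamily.hasFiniteMoments_hermiteProd {Ω : Type*} [MeasurableSpace Ω]
    {P : Measure Ω} [IsProbabilityMeasure P] {X : ι → Ω → ℝ} {ρ : ι → ι → ℝ}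
    (h : IsStandardGaussianFamily X ρ P) (a : ι → ℕ) :
    HasFiniteMoments (fun ω => hermiteProd a fun i => X i ω) P :=
  .prod _ fun i _ => h.hasFiniteMoments_hermiteFun i (a i)

variable [DecidableEq ι]

lemma hermiteProd_eq_mul_prod_erase {a b : ι → ℕ} {j : ι} (h : ∀ i ≠ j, b i = a i) (y : ι → ℝ) :
    hermiteProd b y =
      hermiteFun (b j) (y j) * ∏ i ∈ Finset.univ.erase j, hermiteFun (a i) (y i) := by
  rw [hermiteProd, ← Finset.mul_prod_erase _ _ (Finset.mem_univ j)]
  congr 1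
  exact Finset.prod_congr rfl fun i hi => by rw [h i (Finset.ne_of_mem_erase hi)]

lemma hermiteProd_sub_single (a : ι → ℕ) (j : ι) (y : ι → ℝ) :
    hermiteProd (a - Pi.single j 1) y =
      hermiteFun (a j - 1) (y j) * ∏ i ∈ Finset.univ.erase j, hermiteFun (a i) (y i) := by
  rw [hermiteProd_eq_mul_prod_erase (a := a) (j := j) fun i hi => by simp [hi]]
  simp

lemma hasLineDerivAt_hermiteProd (a : ι → ℕ) (y v : ι → ℝ) :
    HasLineDerivAt ℝ (hermiteProd a)
      (∑ j, v j * (a j * hermiteProd (a - Pi.single j 1) y)) y v := by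
  have h := HasDerivAt.fun_finsetProd (u := Finset.univ)
    fun i _ => hasLineDerivAt_hermiteFun_apply (a i) i y v
  simp only [zero_smul, add_zero, smul_eq_mul] at h
  refine h.congr_deriv (Finset.sum_congr rfl fun j _ => ?_)
  rw [hermiteProd_sub_single]
  ring

lemma hermiteProd_add_single (a : ι → ℕ) (k : ι) (y : ι → ℝ) :
    hermiteProd (a + Pi.single k 1) y =
      y k * hermiteProd a y - a k * hermiteProd (a - Pi.single k 1) y := by
  rw [hermiteProd_eq_mul_prod_erase (a := a) (j := k) fun i hi => by simp [hi],
    hermiteProd_eq_mul_prod_erase (b := a) (j := k) fun _ _ => rfl, hermiteProd_sub_single]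
  simp only [Pi.add_apply, Pi.single_eq_same, hermiteFun_succ]
  ring

theorem IsStandardGaussianFamily.isWickFamily {Ω : Type*} [MeasurableSpace Ω]
    {P : Measure Ω} [IsProbabilityMeasure P] {X : ι → Ω → ℝ} {ρ : ι → ι → ℝ}
    (h : IsStandardGaussianFamily X ρ P) :
    IsWickFamily (Matrix.of ρ - 1) fun a => ∫ ω, hermiteProd a (fun i => X i ω) ∂P where
  zero := by simp [hermiteProd]
  add_single a k := by
    have hm := h.hasFiniteMoments_hermiteProd
    have hm' (j : ι) := ((hm (a - Pi.single j 1)).const_mul (a j)).const_mul (ρ k j)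
    have ibp := h.integral_smul_eq k (by fun_prop) (by fun_prop)
      (fun y => hasLineDerivAt_hermiteProd a y (ρ k)) (hm a) (.sum _ fun j _ => hm' j)
    rw [integral_finsetSum _ fun j _ => (hm' j).integrable] at ibp
    simp only [hermiteProd_add_single]
    rw [integral_sub ((h.hasFiniteMoments k).mul (hm a)).integrable
      ((hm _).const_mul _).integrable]
    simp only [smul_eq_mul, integral_const_mul] at ibp ⊢
    rw [ibp]
    simp [sub_mul, Finset.sum_sub_distrib, Matrix.one_apply]

end HermiteMoments

section FourPoints

variable {ι : Type*}

/-- The ways of pairing `p` half-edges at each of four vertices `i, j, k, l`, without pairing two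
at the same vertex, that connect `{i, j}` with `{k, l}`: `e 0` is the number of edges `ij` (which is
also the number of edges `kl`), `e 1` that of `ik` and `jl`, and `e 2` that of `il` and `jk`. -/
def crossingPairings (p : ℕ) : Finset (Fin 3 → ℕ) :=
  {e ∈ Finset.Nat.antidiagonalTuple 3 p | e 0 < p}

lemma mem_crossingPairings {p : ℕ} {e : Fin 3 → ℕ} :
    e ∈ crossingPairings p ↔ e 0 + e 1 + e 2 = p ∧ e 0 < p := by
  simp [crossingPairings, Finset.Nat.mem_antidiagonalTuple, Fin.sum_univ_three]

/-- The contribution of a pairing to a fourth mixed moment, encoded as in `crossingPairings`. -/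
def pairingProd (r : ι → ι → ℝ) (e : Fin 3 → ℕ) (i j k l : ι) : ℝ :=
  (r i j * r k l) ^ e 0 * (r i k * r j l) ^ e 1 * (r i l * r j k) ^ e 2

lemma pairingProd_nonneg {r : ι → ι → ℝ} (hr : ∀ i j, 0 ≤ r i j) (e : Fin 3 → ℕ) (i j k l : ι) :
    0 ≤ pairingProd r e i j k l := by
  have h (i j k l) : 0 ≤ r i j * r k l := mul_nonneg (hr i j) (hr k l)
  exact mul_nonneg (mul_nonneg (pow_nonneg (h i j k l) _) (pow_nonneg (h i k j l) _))
    (pow_nonneg (h i l j k) _)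

lemma exists_mem_crossingPairings {p : ℕ} {m : (Fin 2 ⊕ Fin 2) × (Fin 2 ⊕ Fin 2) →₀ ℕ}
    (hm : Finsupp.weight edgeDegree m = fun _ => p) (hloop : ∀ i, m (i, i) = 0)
    (hcross : ∃ e ∈ m.support, e.1.isLeft ≠ e.2.isLeft) :
    ∃ e ∈ crossingPairings p,
      (m (.inl 0, .inl 1) + m (.inl 1, .inl 0) = e 0 ∧
        m (.inr 0, .inr 1) + m (.inr 1, .inr 0) = e 0) ∧
      (m (.inl 0, .inr 0) + m (.inr 0, .inl 0) = e 1 ∧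
        m (.inl 1, .inr 1) + m (.inr 1, .inl 1) = e 1) ∧
      (m (.inl 0, .inr 1) + m (.inr 1, .inl 0) = e 2 ∧
        m (.inl 1, .inr 0) + m (.inr 0, .inl 1) = e 2) := by
  have hdeg (i : Fin 2 ⊕ Fin 2) : ∑ e, m e * edgeDegree e i = p := by
    have := congrFun hm i
    rwa [Finsupp.weight_apply, Finsupp.sum_fintype _ _ (by simp), Finset.sum_apply] at this
  have h₁ := hdeg (.inl 0)
  have h₂ := hdeg (.inl 1)
  have h₃ := hdeg (.inr 0)
  have h₄ := hdeg (.inr 1)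
  simp only [edgeDegree, Fin.isValue, Pi.add_apply, Fintype.sum_prod_type, Fintype.sum_sum_type,
    Fin.sum_univ_two, Pi.single_eq_same, ne_eq, Sum.inl.injEq, zero_ne_one, not_false_eq_true,
    Pi.single_eq_of_ne, add_zero, reduceCtorEq, hloop, Nat.reduceAdd, zero_mul, mul_one, zero_add,
    mul_zero, one_ne_zero, Sum.inr.injEq] at h₁ h₂ h₃ h₄
  refine ⟨![m (.inl 0, .inl 1) + m (.inl 1, .inl 0), m (.inl 0, .inr 0) + m (.inr 0, .inl 0),
    m (.inl 0, .inr 1) + m (.inr 1, .inl 0)], mem_crossingPairings.2 ⟨?_, ?_⟩, ?_⟩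
  · simp only [Matrix.cons_val]
    omega
  · simp only [Finsupp.mem_support_iff, ne_eq, Prod.exists, Sum.exists, Sum.isLeft_inl,
      Sum.isLeft_inr, reduceCtorEq, not_true_eq_false, not_false_eq_true, and_true, and_false,
      false_or, or_false, Fin.exists_fin_two, Fin.isValue] at hcross
    simp only [Matrix.cons_val]
    omega
  · refine ⟨⟨rfl, ?_⟩, ⟨rfl, ?_⟩, rfl, ?_⟩ <;> simp only [Matrix.cons_val] <;> omega

lemma abs_finsuppProd_le_sum_pairingProd {R : Matrix (Fin 2 ⊕ Fin 2) (Fin 2 ⊕ Fin 2) ℝ}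
    (hsymm : R.IsSymm) (hdiag : ∀ i, R i i = 0) {p : ℕ}
    {m : (Fin 2 ⊕ Fin 2) × (Fin 2 ⊕ Fin 2) →₀ ℕ}
    (hm : Finsupp.weight edgeDegree m = fun _ => p)
    (hcross : ∃ e ∈ m.support, e.1.isLeft ≠ e.2.isLeft) :
    |m.prod fun e n => R e.1 e.2 ^ n| ≤ ∑ e ∈ crossingPairings p,
      pairingProd (fun i j => |R i j|) e (.inl 0) (.inl 1) (.inr 0) (.inr 1) := by
  have hnonneg : ∀ e ∈ crossingPairings p,
      0 ≤ pairingProd (fun i j => |R i j|) e (.inl 0) (.inl 1) (.inr 0) (.inr 1) :=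
    fun e _ => pairingProd_nonneg (fun _ _ => abs_nonneg _) _ _ _ _ _
  by_cases hloop : ∀ i, m (i, i) = 0
  · obtain ⟨e, he, ⟨h01, h23⟩, ⟨h02, h13⟩, ⟨h03, h12⟩⟩ :=
      exists_mem_crossingPairings hm hloop hcross
    refine le_of_eq_of_le ?_ (Finset.single_le_sum hnonneg he)
    rw [Finsupp.prod_fintype _ _ (by simp), Finset.abs_prod, pairingProd]
    simp only [mul_pow]
    nth_rw 1 [← h01, ← h23, ← h02, ← h13, ← h03, ← h12]
    simp only [abs_pow, Fintype.prod_prod_type, Fintype.prod_sum_type, Fin.prod_univ_two,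
      Fin.isValue, hloop, pow_zero, one_mul, mul_one, pow_add, hsymm.apply (.inl 0) (.inl 1),
      hsymm.apply (.inl 0) (.inr 0), hsymm.apply (.inl 0) (.inr 1), hsymm.apply (.inl 1) (.inr 0),
      hsymm.apply (.inl 1) (.inr 1), hsymm.apply (.inr 0) (.inr 1)]
    ring
  · push Not at hloop
    obtain ⟨i, hi⟩ := hloop
    rw [Finsupp.prod, Finset.prod_eq_zero (Finsupp.mem_support_iff.2 hi) (by simp [hdiag, hi]),
      abs_zero]
    exact Finset.sum_nonneg hnonneg

variable {Ω : Type*} [MeasurableSpace Ω] {P : Measure Ω} [IsProbabilityMeasure P]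

theorem exists_abs_covariance_hermiteFun_mul_le (P : Measure Ω) [IsProbabilityMeasure P] (p : ℕ) :
    ∃ C : ℝ, 0 ≤ C ∧ ∀ {ι : Type*} [Finite ι] {X : ι → Ω → ℝ} {ρ : ι → ι → ℝ},
      IsStandardGaussianFamily X ρ P → ∀ i j k l,
        |cov[fun ω => hermiteFun p (X i ω) * hermiteFun p (X j ω),
          fun ω => hermiteFun p (X k ω) * hermiteFun p (X l ω); P]| ≤
        C * ∑ e ∈ crossingPairings p, pairingProd (fun i j => |ρ i j|) e i j k l := by
  obtain ⟨C, hC, hCle⟩ := exists_abs_sub_mul_le (ι := Fin 2) (κ := Fin 2) fun _ => p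
  refine ⟨C, hC, fun {ι _ X ρ} h i j k l => ?_⟩
  have hm (i) := h.hasFiniteMoments_hermiteFun i p
  let f : Fin 2 ⊕ Fin 2 → ι := Sum.elim ![i, j] ![k, l]
  have hR (a b) : (Matrix.of (fun a b => ρ (f a) (f b)) - 1) a b =
      if a = b then 0 else ρ (f a) (f b) := by
    rcases eq_or_ne a b with rfl | hab
    · simp [h.self_eq_one]
    · simp [hab]
  let R := Matrix.of (fun a b => ρ (f a) (f b)) - 1
  have hW₁ : IsWickFamily R.toBlocks₁₁
      fun a => ∫ ω, hermiteProd a (fun s => X (![i, j] s) ω) ∂P := by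
    convert (h.comp ![i, j]).isWickFamily using 1
    ext a b
    simp [R, Matrix.toBlocks₁₁, Matrix.one_apply, f]
  have hW₂ : IsWickFamily R.toBlocks₂₂
      fun a => ∫ ω, hermiteProd a (fun s => X (![k, l] s) ω) ∂P := by
    convert (h.comp ![k, l]).isWickFamily using 1
    ext a b
    simp [R, Matrix.toBlocks₂₂, Matrix.one_apply, f]
  have hle := hCle R _ _ _ (∑ e ∈ crossingPairings p, pairingProd (fun i j => |ρ i j|) e i j k l)
    (h.comp f).isWickFamily hW₁ hW₂
    (Finset.sum_nonneg fun e _ => pairingProd_nonneg (fun _ _ => abs_nonneg _) _ _ _ _ _)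
    fun m hm hcross => by
      refine (abs_finsuppProd_le_sum_pairingProd (.ext fun a b => ?_) (fun a => ?_)
        hm hcross).trans_eq ?_
      · simp only [R, hR, eq_comm (a := a), h.symm (f a)]
      · simp [R, hR]
      · simp [R, hR, pairingProd, f]
  rw [covariance_eq_sub ((hm i).mul (hm j)).memLp_two ((hm k).mul (hm l)).memLp_two]
  convert hle using 3 <;> simp [hermiteProd, f]

theorem IsStandardGaussianFamily.integral_hermiteFun_mul_hermiteFun [Finite ι] {X : ι → Ω → ℝ}
    {ρ : ι → ι → ℝ} (h : IsStandardGaussianFamily X ρ P) (i j : ι) (n : ℕ) :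
    ∫ ω, hermiteFun n (X i ω) * hermiteFun n (X j ω) ∂P = n.factorial * ρ i j ^ n := by
  induction n with
  | zero => simp
  | succ n ih =>
    have hm := h.hasFiniteMoments_hermiteFun j
    have ibp := h.integral_hermiteFun_succ_smul i n (by fun_prop) (by fun_prop)
      (fun y => hasLineDerivAt_hermiteFun_apply (n + 1) j y (ρ i)) (hm (n + 1))
      (((hm n).const_mul ((n + 1 : ℕ) : ℝ)).mul (.const (ρ i j)))
    calc ∫ ω, hermiteFun (n + 1) (X i ω) * hermiteFun (n + 1) (X j ω) ∂P
        = ∫ ω, (n + 1) * ρ i j * (hermiteFun n (X i ω) * hermiteFun n (X j ω)) ∂P := by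
          refine ibp.trans (integral_congr_ae (.of_forall fun ω => ?_))
          simp only [add_tsub_cancel_right, smul_eq_mul, Nat.cast_add_one]
          ring
      _ = (n + 1).factorial * ρ i j ^ (n + 1) := by
          rw [integral_const_mul, ih, Nat.factorial_succ, Nat.cast_mul, Nat.cast_add_one]
          ring

end FourPoints

section SteinKernel

variable {Ω : Type*} [MeasurableSpace Ω] {P : Measure Ω} {V Γ : Ω → ℝ}

/-- `Γ` is a Stein kernel of `V`: `𝔼[V f(V)] = 𝔼[Γ f'(V)]` for bounded `f` of class `C¹` with
bounded derivative, so that `V` is close to a centred Gaussian variable of variance `v` as soon as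
`Γ` is close to `v`. The test functions are complex valued so that they include the characters. -/
structure IsSteinKernel (V Γ : Ω → ℝ) (P : Measure Ω) : Prop where
  integrable : Integrable V P
  integrable_kernel : Integrable Γ P
  integral_smul_eq : ∀ (f f' : ℝ → ℂ) (C : ℝ), (∀ x, HasDerivAt f (f' x) x) → Continuous f' →
    (∀ x, ‖f x‖ ≤ C) → (∀ x, ‖f' x‖ ≤ C) → ∫ ω, V ω • f (V ω) ∂P = ∫ ω, Γ ω • f' (V ω) ∂P

lemma IsSteinKernel.const_mul (h : IsSteinKernel V Γ P) (c : ℝ) :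
    IsSteinKernel (fun ω => c * V ω) (fun ω => c ^ 2 * Γ ω) P where
  integrable := h.integrable.const_mul c
  integrable_kernel := h.integrable_kernel.const_mul _
  integral_smul_eq f f' C hd hf' hC hC' := by
    have hC0 : 0 ≤ C := (norm_nonneg _).trans (hC 0)
    have hd' (x : ℝ) : HasDerivAt (fun x => f (c * x)) (c • f' (c * x)) x :=
      HasDerivAt.scomp x (hd (c * x)) (hasDerivAt_const_mul c)
    have := h.integral_smul_eq _ _ (C + |c| * C) hd' (by fun_prop)
      (fun x => (hC _).trans (le_add_of_nonneg_right (by positivity)))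
      fun x => by
        rw [norm_smul, Real.norm_eq_abs]
        exact (mul_le_mul_of_nonneg_left (hC' _) (abs_nonneg c)).trans
          (le_add_of_nonneg_left hC0)
    simp only [sq, mul_smul, integral_smul, this]
    simp only [smul_comm _ c, integral_smul]

lemma norm_cexp_ofReal_mul_ofReal_mul_I (t x : ℝ) : ‖Complex.exp (t * x * Complex.I)‖ = 1 := by
  exact_mod_cast Complex.norm_exp_ofReal_mul_I (t * x)

lemma integrable_smul_cexp [IsFiniteMeasure P] (hV : AEStronglyMeasurable V P) {g : Ω → ℝ}
    (hg : Integrable g P) (t : ℝ) :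
    Integrable (fun ω => g ω • Complex.exp (t * V ω * Complex.I)) P :=
  hg.smul_bdd 1 (by fun_prop) (ae_of_all _ fun ω => (norm_cexp_ofReal_mul_ofReal_mul_I t _).le)

lemma hasDerivAt_charFun_map [IsFiniteMeasure P] (hV : Integrable V P) (t : ℝ) :
    HasDerivAt (charFun (P.map V))
      (Complex.I * ∫ ω, V ω • Complex.exp (t * V ω * Complex.I) ∂P) t := by
  have hid : MemLp id 1 (P.map V) :=
    (memLp_map_measure_iff aestronglyMeasurable_id hV.aemeasurable).2
      (memLp_one_iff_integrable.2 hV)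
  have hC : ContDiff ℝ 1 (charFun (P.map V)) := contDiff_charFun (by simpa using hid)
  have h := (hC.differentiable one_ne_zero t).hasDerivAt
  rw [← iteratedDeriv_one, iteratedDeriv_charFun (by simpa using hid),
    integral_map hV.aemeasurable (by fun_prop)] at h
  simpa using h

lemma IsSteinKernel.hasDerivAt_charFun_map [IsFiniteMeasure P] (h : IsSteinKernel V Γ P) (t : ℝ) :
    HasDerivAt (charFun (P.map V))
      (-t * ∫ ω, Γ ω • Complex.exp (t * V ω * Complex.I) ∂P) t := by
  have hd (x : ℝ) : HasDerivAt (fun x : ℝ => Complex.exp (t * x * Complex.I))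
      (t * Complex.I * Complex.exp (t * x * Complex.I)) x := by
    have := (((hasDerivAt_id x).ofReal_comp.const_mul (t : ℂ)).mul_const Complex.I).cexp
    simpa [mul_comm] using this
  have hStein := h.integral_smul_eq _ _ (1 + |t|) hd (by fun_prop)
    (fun x => by simp [norm_cexp_ofReal_mul_ofReal_mul_I])
    (fun x => by simp [norm_cexp_ofReal_mul_ofReal_mul_I])
  convert BreuerMajor.hasDerivAt_charFun_map h.integrable t using 1
  simp only [hStein, mul_smul_comm, ← integral_const_mul]
  congr with ω
  simp only [Complex.real_smul]
  linear_combination (-Γ ω * t * Complex.exp (t * V ω * Complex.I)) * Complex.I_mul_I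

theorem IsSteinKernel.norm_cexp_mul_charFun_map_sub_one_le [IsProbabilityMeasure P]
    (h : IsSteinKernel V Γ P) (v t : ℝ) :
    ‖Complex.exp (v * t ^ 2 / 2) * charFun (P.map V) t - 1‖ ≤
      rexp (|v| * t ^ 2 / 2) * |t| * (∫ ω, |v - Γ ω| ∂P) * |t| := by
  have : IsProbabilityMeasure (P.map V) :=
    Measure.isProbabilityMeasure_map h.integrable.aemeasurable
  let E (s : ℝ) : ℂ := ∫ ω, (v - Γ ω) • Complex.exp (s * V ω * Complex.I) ∂P
  have hE (s : ℝ) : E s = v * charFun (P.map V) s -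
      ∫ ω, Γ ω • Complex.exp (s * V ω * Complex.I) ∂P := by
    rw [charFun_apply_real, integral_map h.integrable.aemeasurable (by fun_prop),
      ← Complex.real_smul, ← integral_smul, ← integral_sub
        (integrable_smul_cexp h.integrable.1 (integrable_const v) s)
        (integrable_smul_cexp h.integrable.1 h.integrable_kernel s)]
    simp only [E, sub_smul]
  have hder (s : ℝ) : HasDerivAt
      (fun s : ℝ => Complex.exp (v * s ^ 2 / 2) * charFun (P.map V) s)
      (Complex.exp (v * s ^ 2 / 2) * (s * E s)) s := by
    have hexp : HasDerivAt (fun s : ℝ => Complex.exp (v * s ^ 2 / 2))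
        (Complex.exp (v * s ^ 2 / 2) * (v * s)) s := by
      have := ((((hasDerivAt_id s).ofReal_comp.fun_pow 2).const_mul (v : ℂ)).div_const 2).cexp
      convert! this using 2
      simp only [id_eq, Complex.ofReal_one, Nat.add_one_sub_one, pow_one, mul_one]
      push_cast
      ring
    convert! hexp.mul (h.hasDerivAt_charFun_map s) using 1
    rw [hE]
    ring
  have hbound : ∀ s ∈ Set.Icc (-|t|) |t|, ‖Complex.exp (v * s ^ 2 / 2) * (s * E s)‖ ≤
      rexp (|v| * t ^ 2 / 2) * |t| * ∫ ω, |v - Γ ω| ∂P := fun s hs => by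
    have hs' : |s| ≤ |t| := abs_le.2 hs
    have hs2 : v * s ^ 2 ≤ |v| * t ^ 2 :=
      mul_le_mul (le_abs_self v) (sq_le_sq.2 hs') (sq_nonneg s) (abs_nonneg v)
    have hEs : ‖E s‖ ≤ ∫ ω, |v - Γ ω| ∂P :=
      (norm_integral_le_integral_norm _).trans_eq <| by
        simp only [norm_smul, norm_cexp_ofReal_mul_ofReal_mul_I, mul_one, Real.norm_eq_abs]
    have hre : ((v : ℂ) * s ^ 2 / 2).re = v * s ^ 2 / 2 := by norm_cast
    rw [norm_mul, norm_mul, Complex.norm_exp, hre, Complex.norm_real, Real.norm_eq_abs, mul_assoc]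
    gcongr
  simpa using (convex_Icc (-|t|) |t|).norm_image_sub_le_of_norm_hasDerivWithin_le
    (fun s _ => (hder s).hasDerivWithinAt) hbound (x := 0) (y := t) (by simp)
    ⟨neg_abs_le t, le_abs_self t⟩

lemma integral_abs_sub_le [IsProbabilityMeasure P] (hΓ : MemLp Γ 2 P) (v : ℝ) :
    ∫ ω, |v - Γ ω| ∂P ≤ √(Var[Γ; P] + (v - P[Γ]) ^ 2) := by
  have hm : MemLp (fun ω => v - Γ ω) 2 P := (memLp_const v).sub hΓ
  have habs := variance_eq_sub hm.abs
  have hsub := variance_eq_sub hm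
  rw [variance_const_sub hΓ.1, integral_sub (integrable_const v) (hΓ.integrable one_le_two)] at hsub
  have hnonneg := variance_nonneg |fun ω => v - Γ ω| P
  refine Real.le_sqrt_of_sq_le ?_
  simp only [Pi.pow_apply, Pi.abs_apply, sq_abs, integral_const, probReal_univ, one_smul]
    at habs hsub
  linarith

theorem tendsto_charFun_map_of_isSteinKernel [IsProbabilityMeasure P] {α : Type*} {l : Filter α}
    {V Γ : α → Ω → ℝ} (h : ∀ n, IsSteinKernel (V n) (Γ n) P) (hΓ : ∀ n, MemLp (Γ n) 2 P) {v : ℝ}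
    (hmean : Tendsto (fun n => P[Γ n]) l (𝓝 v)) (hvar : Tendsto (fun n => Var[Γ n; P]) l (𝓝 0))
    (t : ℝ) :
    Tendsto (fun n => charFun (P.map (V n)) t) l (𝓝 (Complex.exp (-(v * t ^ 2 / 2)))) := by
  have hint : Tendsto (fun n => ∫ ω, |v - Γ n ω| ∂P) l (𝓝 0) := by
    refine squeeze_zero (fun n => integral_nonneg fun ω => abs_nonneg _)
      (fun n => integral_abs_sub_le (hΓ n) v) ?_
    simpa using (hvar.add ((hmean.const_sub v).pow 2)).sqrt
  have hone : Tendsto (fun n => Complex.exp (v * t ^ 2 / 2) * charFun (P.map (V n)) t) l (𝓝 1) := by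
    refine tendsto_iff_norm_sub_tendsto_zero.2 (squeeze_zero (fun n => norm_nonneg _)
      (fun n => (h n).norm_cexp_mul_charFun_map_sub_one_le v t) ?_)
    simpa using (hint.const_mul (rexp (|v| * t ^ 2 / 2) * |t|)).mul_const |t|
  rw [Complex.exp_neg, ← one_div]
  refine (hone.div_const (Complex.exp (v * t ^ 2 / 2))).congr fun n => ?_
  rw [mul_div_cancel_left₀ _ (Complex.exp_ne_zero _)]

end SteinKernel

section HermiteSum

variable {Ω ι : Type*} [MeasurableSpace Ω] [Fintype ι] {P : Measure Ω} [IsProbabilityMeasure P]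
  {X : ι → Ω → ℝ} {ρ : ι → ι → ℝ}

/-- The sum of the Hermite polynomials of degree `q` of the members of `X`. -/
noncomputable def hermiteSum (X : ι → Ω → ℝ) (q : ℕ) (ω : Ω) : ℝ :=
  ∑ i, hermiteFun q (X i ω)

/-- The Stein kernel of `hermiteSum X (p + 1)`, that is `⟨DV, -DL⁻¹V⟩` with
`V = hermiteSum X (p + 1)` in the notation of the Malliavin calculus. -/
noncomputable def hermiteSumKernel (X : ι → Ω → ℝ) (ρ : ι → ι → ℝ) (p : ℕ) (ω : Ω) : ℝ :=
  (p + 1) * ∑ i, ∑ j, ρ i j * (hermiteFun p (X i ω) * hermiteFun p (X j ω))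

namespace IsStandardGaussianFamily

lemma hasFiniteMoments_hermiteSum (h : IsStandardGaussianFamily X ρ P) (q : ℕ) :
    HasFiniteMoments (hermiteSum X q) P :=
  .sum _ fun i _ => h.hasFiniteMoments_hermiteFun i q

lemma hasFiniteMoments_hermiteSumKernel (h : IsStandardGaussianFamily X ρ P) (p : ℕ) :
    HasFiniteMoments (hermiteSumKernel X ρ p) P :=
  .const_mul (.sum _ fun i _ => .sum _ fun j _ =>
    ((h.hasFiniteMoments_hermiteFun i p).mul (h.hasFiniteMoments_hermiteFun j p)).const_mul _) _

theorem isSteinKernel_hermiteSumKernel (h : IsStandardGaussianFamily X ρ P) (p : ℕ) :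
    IsSteinKernel (hermiteSum X (p + 1)) (hermiteSumKernel X ρ p) P where
  integrable := (h.hasFiniteMoments_hermiteSum _).integrable
  integrable_kernel := (h.hasFiniteMoments_hermiteSumKernel p).integrable
  integral_smul_eq f f' C hd hf' hC hC' := by
    have hf : Continuous f := continuous_iff_continuousAt.2 fun x => (hd x).continuousAt
    have hV := (h.hasFiniteMoments_hermiteSum (p + 1)).integrable.1
    have hfV : HasFiniteMoments (fun ω => f (hermiteSum X (p + 1) ω)) P := fun _ =>
      .of_bound (hf.comp_aestronglyMeasurable hV) C (ae_of_all _ fun ω => hC _)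
    have hf'V : HasFiniteMoments (fun ω => f' (hermiteSum X (p + 1) ω)) P := fun _ =>
      .of_bound (hf'.comp_aestronglyMeasurable hV) C (ae_of_all _ fun ω => hC' _)
    have hgrad (k : ι) : HasFiniteMoments (fun ω =>
        (∑ j, (p + 1 : ℕ) * hermiteFun p (X j ω) * ρ k j) • f' (hermiteSum X (p + 1) ω)) P :=
      .smul (.sum _ fun j _ =>
        ((h.hasFiniteMoments_hermiteFun j p).const_mul _).mul (.const _)) hf'V
    have ibp (k : ι) := h.integral_hermiteFun_succ_smul k p
      (G := fun y => f (∑ i, hermiteFun (p + 1) (y i)))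
      (G' := fun y => (∑ j, (p + 1 : ℕ) * hermiteFun p (y j) * ρ k j) •
        f' (∑ i, hermiteFun (p + 1) (y i)))
      (by fun_prop) (by fun_prop) (fun y => by
        have hsum := HasDerivAt.fun_sum (u := Finset.univ) fun j _ =>
          hasLineDerivAt_hermiteFun_apply (p + 1) j y (ρ k)
        exact HasDerivAt.scomp_of_eq 0 (hd _) hsum (by simp)) hfV (hgrad k)
    calc ∫ ω, hermiteSum X (p + 1) ω • f (hermiteSum X (p + 1) ω) ∂P
        = ∑ k, ∫ ω, hermiteFun (p + 1) (X k ω) • f (hermiteSum X (p + 1) ω) ∂P := by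
          rw [← integral_finsetSum _ fun k _ =>
            ((h.hasFiniteMoments_hermiteFun k _).smul hfV).integrable]
          simp only [← Finset.sum_smul]
          rfl
      _ = ∑ k, ∫ ω, hermiteFun p (X k ω) • (∑ j, (p + 1 : ℕ) * hermiteFun p (X j ω) * ρ k j) •
            f' (hermiteSum X (p + 1) ω) ∂P := Finset.sum_congr rfl fun k _ => ibp k
      _ = ∫ ω, hermiteSumKernel X ρ p ω • f' (hermiteSum X (p + 1) ω) ∂P := by
          rw [← integral_finsetSum _ fun k _ =>
            ((h.hasFiniteMoments_hermiteFun k _).smul (hgrad k)).integrable]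
          congr with ω
          simp only [smul_smul, ← Finset.sum_smul, hermiteSumKernel, Finset.mul_sum]
          congr! 3 with k - j
          push_cast
          ring

theorem integral_hermiteSumKernel (h : IsStandardGaussianFamily X ρ P) (p : ℕ) :
    P[hermiteSumKernel X ρ p] = (p + 1).factorial * ∑ i, ∑ j, ρ i j ^ (p + 1) := by
  have hm (i j : ι) : HasFiniteMoments
      (fun ω => ρ i j * (hermiteFun p (X i ω) * hermiteFun p (X j ω))) P :=
    ((h.hasFiniteMoments_hermiteFun i p).mul (h.hasFiniteMoments_hermiteFun j p)).const_mul _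
  simp only [hermiteSumKernel]
  rw [integral_const_mul, integral_finsetSum _ fun i _ => (HasFiniteMoments.sum _ fun j _ =>
    hm i j).integrable, Finset.mul_sum, Finset.mul_sum]
  refine Finset.sum_congr rfl fun i _ => ?_
  rw [integral_finsetSum _ fun j _ => (hm i j).integrable, Finset.mul_sum, Finset.mul_sum]
  refine Finset.sum_congr rfl fun j _ => ?_
  rw [integral_const_mul, h.integral_hermiteFun_mul_hermiteFun, Nat.factorial_succ, pow_succ']
  push_cast
  ring

end IsStandardGaussianFamily

theorem exists_variance_hermiteSumKernel_le (P : Measure Ω) [IsProbabilityMeasure P] (p : ℕ) :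
    ∃ C : ℝ, 0 ≤ C ∧ ∀ {ι : Type*} [Fintype ι] {X : ι → Ω → ℝ} {ρ : ι → ι → ℝ},
      IsStandardGaussianFamily X ρ P → Var[hermiteSumKernel X ρ p; P] ≤
        C * ∑ e ∈ crossingPairings p, ∑ i, ∑ j, ∑ k, ∑ l,
          |ρ i j| * |ρ k l| * pairingProd (fun i j => |ρ i j|) e i j k l := by
  obtain ⟨C, hC, hcov⟩ := exists_abs_covariance_hermiteFun_mul_le P p
  refine ⟨(p + 1) ^ 2 * C, by positivity, fun {ι _ X ρ} h => ?_⟩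
  have hm (a : ι × ι) : HasFiniteMoments
      (fun ω => ρ a.1 a.2 * (hermiteFun p (X a.1 ω) * hermiteFun p (X a.2 ω))) P :=
    ((h.hasFiniteMoments_hermiteFun a.1 p).mul (h.hasFiniteMoments_hermiteFun a.2 p)).const_mul _
  calc Var[hermiteSumKernel X ρ p; P]
      = (p + 1) ^ 2 * ∑ a : ι × ι, ∑ b : ι × ι, ρ a.1 a.2 * (ρ b.1 b.2 * cov[
          fun ω => hermiteFun p (X a.1 ω) * hermiteFun p (X a.2 ω),
          fun ω => hermiteFun p (X b.1 ω) * hermiteFun p (X b.2 ω); P]) := by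
        have hV : hermiteSumKernel X ρ p = fun ω => (p + 1) * ∑ a : ι × ι,
            ρ a.1 a.2 * (hermiteFun p (X a.1 ω) * hermiteFun p (X a.2 ω)) := by
          ext ω
          rw [Fintype.sum_prod_type, hermiteSumKernel]
        rw [hV, variance_const_mul, variance_fun_sum fun a => (hm a).memLp_two]
        simp_rw [covariance_const_mul_left, covariance_const_mul_right]
    _ ≤ (p + 1) ^ 2 * ∑ a : ι × ι, ∑ b : ι × ι, |ρ a.1 a.2| * (|ρ b.1 b.2| * (C *
          ∑ e ∈ crossingPairings p, pairingProd (fun i j => |ρ i j|) e a.1 a.2 b.1 b.2)) := by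
        refine mul_le_mul_of_nonneg_left (Finset.sum_le_sum fun a _ => Finset.sum_le_sum fun b _ =>
          (le_abs_self _).trans ?_) (by positivity)
        rw [abs_mul, abs_mul]
        gcongr
        exact hcov h _ _ _ _
    _ = _ := by
        simp only [Fintype.sum_prod_type, Finset.mul_sum]
        simp only [Finset.sum_comm (s := crossingPairings p) (t := Finset.univ)]
        congr! 5
        ring

end HermiteSum

section SummablePowers

variable {α β : Type*} {l : Filter β} {s : β → Finset α}

lemma tendsto_sum_div_card (hs : Tendsto (fun n => ((s n).card : ℝ)) l atTop) {f : α → ℝ}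
    (hf : Tendsto f cofinite (𝓝 0)) :
    Tendsto (fun n => (∑ i ∈ s n, f i) / (s n).card) l (𝓝 0) := by
  classical
  suffices h : (fun n => ∑ i ∈ s n, f i) =o[l] fun n => ((s n).card : ℝ) from
    h.tendsto_div_nhds_zero
  refine Asymptotics.isLittleO_iff.2 fun ε hε => ?_
  have hfin : {i | ¬ |f i| ≤ ε / 2}.Finite := by
    have := hf.abs.eventually_le_const (u := ε / 2) (by simpa using half_pos hε)
    simpa only [eventually_cofinite] using this
  filter_upwards [hs.eventually_ge_atTop ((∑ i ∈ hfin.toFinset, |f i|) / (ε / 2))] with n hn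
  rw [div_le_iff₀ (half_pos hε)] at hn
  have hsmall : ∑ i ∈ s n with |f i| ≤ ε / 2, |f i| ≤ (s n).card * (ε / 2) := calc
    _ ≤ ((s n).filter fun i => |f i| ≤ ε / 2).card • (ε / 2) :=
      Finset.sum_le_card_nsmul _ _ _ fun i hi => (Finset.mem_filter.1 hi).2
    _ ≤ _ := by
      rw [nsmul_eq_mul]
      gcongr
      exact Finset.filter_subset _ _
  have hlarge : ∑ i ∈ s n with ¬ |f i| ≤ ε / 2, |f i| ≤ ∑ i ∈ hfin.toFinset, |f i| :=
    Finset.sum_le_sum_of_subset_of_nonneg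
      (fun i hi => hfin.mem_toFinset.2 (Finset.mem_filter.1 hi).2) fun i _ _ => abs_nonneg _
  calc ‖∑ i ∈ s n, f i‖ ≤ ∑ i ∈ s n, |f i| := Finset.abs_sum_le_sum_abs _ _
    _ = ∑ i ∈ s n with |f i| ≤ ε / 2, |f i| + ∑ i ∈ s n with ¬ |f i| ≤ ε / 2, |f i| :=
      (Finset.sum_filter_add_sum_filter_not _ _ _).symm
    _ ≤ ε * ‖((s n).card : ℝ)‖ := by
      rw [Real.norm_natCast]
      linarith

variable {x : α → ℝ} {a b : ℕ}

/- The average over `j ∈ s n` tends to zero for each `i`, because `x` tends to zero, and is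
dominated by `x i ^ b`. -/
lemma tendsto_sum_pow_mul_sum_min_pow_div_card
    (hs : Tendsto (fun n => ((s n).card : ℝ)) l atTop) (hx : ∀ i, 0 ≤ x i) (hb : b ≠ 0)
    (hsum : Summable fun i => x i ^ (a + b)) :
    Tendsto (fun n => (∑ i ∈ s n, x i ^ a * ∑ j ∈ s n, min (x i) (x j) ^ b) / (s n).card) l
      (𝓝 0) := by
  have hab : a + b ≠ 0 := by omega
  have hx₀ : Tendsto x cofinite (𝓝 0) := by
    have := hsum.tendsto_cofinite_zero.rpow_const (p := ((a + b : ℕ) : ℝ)⁻¹)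
      (Or.inr (by positivity))
    simpa only [Real.pow_rpow_inv_natCast (hx _) hab,
      Real.zero_rpow (inv_ne_zero (Nat.cast_ne_zero.2 hab))] using this
  have hmin (i j) : 0 ≤ min (x i) (x j) := le_min (hx i) (hx j)
  let F (n : β) (i : α) : ℝ := x i ^ a * ((∑ j ∈ s n, min (x i) (x j) ^ b) / (s n).card)
  have hF₀ (n i) : 0 ≤ F n i := by
    have := hx i
    have := Finset.sum_nonneg fun j (_ : j ∈ s n) => pow_nonneg (hmin i j) b
    positivity
  have hF_le (n i) : F n i ≤ x i ^ (a + b) := by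
    rw [pow_add]
    refine mul_le_mul_of_nonneg_left (div_le_of_le_mul₀ (by positivity)
      (pow_nonneg (hx i) b) ?_) (pow_nonneg (hx i) a)
    rw [mul_comm, ← nsmul_eq_mul]
    exact Finset.sum_le_card_nsmul _ _ _ fun j _ =>
      pow_le_pow_left₀ (hmin i j) (min_le_left _ _) b
  have hF_lim (i) : Tendsto (F · i) l (𝓝 0) := by
    have : Tendsto (fun j => min (x i) (x j) ^ b) cofinite (𝓝 0) := by
      simpa only [min_eq_right (hx i), zero_pow hb] using
        ((tendsto_const_nhds (x := x i)).min hx₀).pow b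
    simpa only [mul_zero] using (tendsto_sum_div_card hs this).const_mul (x i ^ a)
  have hlim : Tendsto (fun n => ∑' i, F n i) l (𝓝 0) := by
    simpa only [tsum_zero] using tendsto_tsum_of_dominated_convergence hsum hF_lim
      (.of_forall fun n i => (Real.norm_of_nonneg (hF₀ n i)).trans_le (hF_le n i))
  refine squeeze_zero (fun n => ?_) (fun n => ?_) hlim
  · exact div_nonneg (Finset.sum_nonneg fun i _ => mul_nonneg (pow_nonneg (hx i) a)
      (Finset.sum_nonneg fun j _ => pow_nonneg (hmin i j) b)) (Nat.cast_nonneg _)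
  · calc _ = ∑ i ∈ s n, F n i := by simp only [F, Finset.sum_div, mul_div_assoc]
      _ ≤ _ := Summable.sum_le_tsum (s n) (fun i _ => hF₀ n i)
        (.of_nonneg_of_le (hF₀ n) (hF_le n) hsum)

theorem tendsto_sum_pow_mul_sum_pow_div_card
    (hs : Tendsto (fun n => ((s n).card : ℝ)) l atTop) (hx : ∀ i, 0 ≤ x i) (ha : a ≠ 0)
    (hb : b ≠ 0) (hsum : Summable fun i => x i ^ (a + b)) :
    Tendsto (fun n => (∑ i ∈ s n, x i ^ a) * (∑ i ∈ s n, x i ^ b) / (s n).card) l (𝓝 0) := by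
  have h := (tendsto_sum_pow_mul_sum_min_pow_div_card hs hx hb hsum).add
    (tendsto_sum_pow_mul_sum_min_pow_div_card hs hx ha (add_comm a b ▸ hsum))
  rw [add_zero] at h
  have hpow (m i) : 0 ≤ x i ^ m := pow_nonneg (hx i) m
  have hsum_pow (m n) : 0 ≤ ∑ i ∈ s n, x i ^ m := Finset.sum_nonneg fun i _ => hpow m i
  refine squeeze_zero (fun n => div_nonneg (mul_nonneg (hsum_pow a n) (hsum_pow b n))
    (Nat.cast_nonneg _)) (fun n => ?_) h
  rw [← add_div]
  gcongr ?_ / _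
  calc (∑ i ∈ s n, x i ^ a) * ∑ j ∈ s n, x j ^ b
      = ∑ i ∈ s n, ∑ j ∈ s n, x i ^ a * x j ^ b := Finset.sum_mul_sum _ _ _ _
    _ ≤ ∑ i ∈ s n, ∑ j ∈ s n,
          (x i ^ a * min (x i) (x j) ^ b + x j ^ b * min (x j) (x i) ^ a) := by
      gcongr with i _ j _
      rcases le_total (x i) (x j) with hij | hij
      · rw [min_eq_left hij, min_eq_right hij, mul_comm]
        exact le_add_of_nonneg_left (mul_nonneg (hpow a i) (hpow b i))
      · rw [min_eq_right hij, min_eq_left hij]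
        exact le_add_of_nonneg_right (mul_nonneg (hpow b j) (hpow a j))
    _ = _ := by
      simp only [Finset.sum_add_distrib, Finset.mul_sum]
      rw [add_right_inj, Finset.sum_comm]

end SummablePowers

section StationaryArrays

lemma pow_mul_pow_le {u v : ℝ} (hu : 0 ≤ u) (hv : 0 ≤ v) (a b : ℕ) :
    u ^ a * v ^ b ≤ u ^ (a + b) + v ^ (a + b) := by
  rcases le_total u v with h | h
  · calc u ^ a * v ^ b ≤ v ^ a * v ^ b := by gcongr
      _ ≤ _ := by
        rw [← pow_add]
        exact le_add_of_nonneg_left (by positivity)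
  · calc u ^ a * v ^ b ≤ u ^ a * u ^ b := by gcongr
      _ ≤ _ := by
        rw [← pow_add]
        exact le_add_of_nonneg_right (by positivity)

lemma sum_comp_le_sum_of_injective {ι κ : Type*} [Fintype ι] {f : ι → κ}
    (hf : Function.Injective f) {y : κ → ℝ} (hy : ∀ z, 0 ≤ y z) {s : Finset κ}
    (hs : ∀ i, f i ∈ s) : ∑ i, y (f i) ≤ ∑ z ∈ s, y z := by
  classical
  rw [← Finset.sum_image (f := y) hf.injOn]
  exact Finset.sum_le_sum_of_subset_of_nonneg (Finset.image_subset_iff.2 fun i _ => hs i)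
    fun z _ _ => hy z

lemma injective_fin_sub (n : ℕ) (j : ℤ) : Function.Injective fun i : Fin n => (i : ℤ) - j :=
  (sub_left_injective.comp Nat.cast_injective).comp Fin.val_injective

lemma sum_fin_sub_le_tsum {y : ℤ → ℝ} (hy : ∀ z, 0 ≤ y z) (hsum : Summable y) (n : ℕ) (j : ℤ) :
    ∑ i : Fin n, y (i - j) ≤ ∑' z, y z := by
  rw [← tsum_fintype (L := .unconditional _)]
  exact tsum_comp_le_tsum_of_inj hsum hy (injective_fin_sub n j)

variable {x : ℤ → ℝ}

lemma sum_pow_mul_pow_mul_pow_le (hx : ∀ z, 0 ≤ x z) (a b c : ℕ)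
    (hsum : Summable fun z => x z ^ (a + b + c)) (n : ℕ) (j k l : ℤ) :
    ∑ i : Fin n, x (i - j) ^ a * x (i - k) ^ b * x (i - l) ^ c ≤
      4 * ∑' z, x z ^ (a + b + c) := by
  have hrow := sum_fin_sub_le_tsum (fun z => pow_nonneg (hx z) (a + b + c)) hsum n
  have hle {u v w : ℝ} (hu : 0 ≤ u) (hv : 0 ≤ v) (hw : 0 ≤ w) : u ^ a * v ^ b * w ^ c ≤
      2 * u ^ (a + b + c) + v ^ (a + b + c) + w ^ (a + b + c) := calc
    _ ≤ u ^ a * (v ^ (b + c) + w ^ (b + c)) := by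
      rw [mul_assoc]
      gcongr
      exact pow_mul_pow_le hv hw b c
    _ ≤ _ := by
      have huv := pow_mul_pow_le hu hv a (b + c)
      have huw := pow_mul_pow_le hu hw a (b + c)
      rw [← add_assoc] at huv huw
      linarith
  calc _ ≤ ∑ i : Fin n, (2 * x (i - j) ^ (a + b + c) + x (i - k) ^ (a + b + c) +
        x (i - l) ^ (a + b + c)) :=
        Finset.sum_le_sum fun i _ => hle (hx _) (hx _) (hx _)
    _ ≤ _ := by
      simp only [Finset.sum_add_distrib, ← Finset.mul_sum]
      linarith [hrow j, hrow k, hrow l]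

/-- The sum of the `m`-th powers of `x` over the possible differences of two indices below `n`. -/
noncomputable def lagPowerSum (x : ℤ → ℝ) (n m : ℕ) : ℝ :=
  ∑ z ∈ Finset.Ioo (-n : ℤ) n, x z ^ m

lemma lagPowerSum_nonneg (hx : ∀ z, 0 ≤ x z) (n m : ℕ) : 0 ≤ lagPowerSum x n m :=
  Finset.sum_nonneg fun z _ => pow_nonneg (hx z) m

lemma sum_fin_sub_pow_le_lagPowerSum (hx : ∀ z, 0 ≤ x z) {n : ℕ} (j : Fin n) (m : ℕ) :
    ∑ i : Fin n, x (i - j) ^ m ≤ lagPowerSum x n m :=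
  sum_comp_le_sum_of_injective (injective_fin_sub n j) (fun z => pow_nonneg (hx z) m)
    fun i => Finset.mem_Ioo.2 (by omega)

lemma tendsto_lagPowerSum_mul_lagPowerSum_div (hx : ∀ z, 0 ≤ x z) {a b : ℕ} (ha : a ≠ 0)
    (hb : b ≠ 0) (hsum : Summable fun z => x z ^ (a + b)) :
    Tendsto (fun n : ℕ => lagPowerSum x n a * lagPowerSum x n b / n) atTop (𝓝 0) := by
  have hcard (n : ℕ) : (Finset.Ioo (-n : ℤ) n).card = 2 * n - 1 := by
    rw [Int.card_Ioo]
    omega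
  have hs : Tendsto (fun n : ℕ => ((Finset.Ioo (-n : ℤ) n).card : ℝ)) atTop atTop :=
    tendsto_natCast_atTop_atTop.comp
      (tendsto_atTop_mono (fun n => by rw [hcard]; omega) (tendsto_sub_atTop_nat 1))
  have h := (tendsto_sum_pow_mul_sum_pow_div_card hs hx ha hb hsum).const_mul 2
  rw [mul_zero] at h
  refine squeeze_zero (fun n => div_nonneg (mul_nonneg (lagPowerSum_nonneg hx n a)
    (lagPowerSum_nonneg hx n b)) n.cast_nonneg) (fun n => ?_) h
  rcases n.eq_zero_or_pos with rfl | hn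
  · simp [lagPowerSum]
  have hpos : (0 : ℝ) < (Finset.Ioo (-n : ℤ) n).card := by
    rw [hcard]
    exact_mod_cast (by omega : 0 < 2 * n - 1)
  have hle : ((Finset.Ioo (-n : ℤ) n).card : ℝ) ≤ 2 * n := by
    rw [hcard]
    exact_mod_cast (by omega : 2 * n - 1 ≤ 2 * n)
  change _ ≤ 2 * (lagPowerSum x n a * lagPowerSum x n b / _)
  rw [mul_div_assoc', div_le_div_iff₀ (by positivity) hpos]
  have := mul_le_mul_of_nonneg_left hle
    (mul_nonneg (lagPowerSum_nonneg hx n a) (lagPowerSum_nonneg hx n b))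
  linarith

lemma sum_triangle_le (hx : ∀ z, 0 ≤ x z) (n a b c : ℕ) :
    ∑ k : Fin n, ∑ l : Fin n, ∑ j : Fin n,
        x (k - l) ^ a * x (j - l) ^ b * x (j - k) ^ c ≤
      2 * n * (lagPowerSum x n a * lagPowerSum x n (b + c)) := by
  have hrow (l : Fin n) (m) := sum_fin_sub_pow_le_lagPowerSum hx l m
  have hL := lagPowerSum_nonneg hx n (b + c)
  calc _ ≤ ∑ k : Fin n, ∑ l : Fin n, ∑ j : Fin n,
          x (k - l) ^ a * (x (j - l) ^ (b + c) + x (j - k) ^ (b + c)) := by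
        simp only [mul_assoc]
        gcongr with k _ l _ j _
        · exact pow_nonneg (hx _) a
        · exact pow_mul_pow_le (hx _) (hx _) b c
    _ = ∑ k : Fin n, ∑ l : Fin n, x (k - l) ^ a *
          (∑ j : Fin n, x (j - l) ^ (b + c) + ∑ j : Fin n, x (j - k) ^ (b + c)) := by
        simp only [← Finset.sum_add_distrib, Finset.mul_sum]
    _ ≤ ∑ k : Fin n, ∑ l : Fin n, x (k - l) ^ a * (2 * lagPowerSum x n (b + c)) := by
        gcongr with k _ l _
        · exact pow_nonneg (hx _) a
        · linarith [hrow l (b + c), hrow k (b + c)]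
    _ ≤ ∑ _l : Fin n, lagPowerSum x n a * (2 * lagPowerSum x n (b + c)) := by
        rw [Finset.sum_comm]
        gcongr with l _
        rw [← Finset.sum_mul]
        exact mul_le_mul_of_nonneg_right (hrow l a) (by positivity)
    _ = _ := by
        simp only [Finset.sum_const, Finset.card_univ, Fintype.card_fin, nsmul_eq_mul]
        ring

lemma sum_comm_four {ι : Type*} [Fintype ι] (f : ι → ι → ι → ι → ℝ) :
    ∑ i, ∑ j, ∑ k, ∑ l, f i j k l = ∑ k, ∑ l, ∑ j, ∑ i, f i j k l := by
  have hrot (g : ι → ι → ι → ℝ) : ∑ i, ∑ j, ∑ k, g i j k = ∑ j, ∑ k, ∑ i, g i j k := by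
    rw [Finset.sum_comm, Finset.sum_congr rfl fun j _ => Finset.sum_comm]
  rw [Finset.sum_congr rfl fun i _ => hrot (f i), hrot]
  exact Finset.sum_congr rfl fun k _ => Finset.sum_congr rfl fun l _ => Finset.sum_comm

lemma sum_pairingProd_le (hx : ∀ z, 0 ≤ x z) (e : Fin 3 → ℕ)
    (hsum : Summable fun z => x z ^ (e 0 + 1 + e 1 + e 2)) (n : ℕ) :
    ∑ i : Fin n, ∑ j : Fin n, ∑ k : Fin n, ∑ l : Fin n,
        x (i - j) * x (k - l) * pairingProd (fun i j : Fin n => x (i - j)) e i j k l ≤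
      4 * (∑' z, x z ^ (e 0 + 1 + e 1 + e 2)) *
        (2 * n * (lagPowerSum x n (e 0 + 1) * lagPowerSum x n (e 1 + e 2))) := by
  have hS : 0 ≤ ∑' z, x z ^ (e 0 + 1 + e 1 + e 2) := tsum_nonneg fun z => pow_nonneg (hx z) _
  rw [sum_comm_four]
  refine le_trans ?_ (mul_le_mul_of_nonneg_left (sum_triangle_le hx n _ (e 1) (e 2))
    (by positivity))
  simp only [Finset.mul_sum]
  refine Finset.sum_le_sum fun k _ => Finset.sum_le_sum fun l _ => Finset.sum_le_sum fun j _ => ?_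
  have hpow (z m) := pow_nonneg (hx z) m
  calc _ = (∑ i : Fin n, x (i - j) ^ (e 0 + 1) * x (i - k) ^ e 1 * x (i - l) ^ e 2) *
        (x (k - l) ^ (e 0 + 1) * x (j - l) ^ e 1 * x (j - k) ^ e 2) := by
        rw [Finset.sum_mul]
        refine Finset.sum_congr rfl fun i _ => ?_
        rw [pairingProd]
        ring
    _ ≤ _ := mul_le_mul_of_nonneg_right
        (sum_pow_mul_pow_mul_pow_le hx _ _ _ hsum n j k l)
        (mul_nonneg (mul_nonneg (hpow _ _) (hpow _ _)) (hpow _ _))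

theorem tendsto_sum_pairingProd_div_sq (hx : ∀ z, 0 ≤ x z) {p : ℕ}
    (hsum : Summable fun z => x z ^ (p + 1)) {e : Fin 3 → ℕ} (he : e ∈ crossingPairings p) :
    Tendsto (fun n : ℕ => (∑ i : Fin n, ∑ j : Fin n, ∑ k : Fin n, ∑ l : Fin n,
      x (i - j) * x (k - l) * pairingProd (fun i j : Fin n => x (i - j)) e i j k l) / n ^ 2)
      atTop (𝓝 0) := by
  obtain ⟨hdeg, hlt⟩ := mem_crossingPairings.1 he
  obtain rfl : p = e 0 + e 1 + e 2 := hdeg.symm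
  have hsum' : Summable fun z => x z ^ (e 0 + 1 + e 1 + e 2) := by
    convert hsum using 3
    omega
  have hlim := (tendsto_lagPowerSum_mul_lagPowerSum_div hx (by omega : e 0 + 1 ≠ 0)
    (by omega : e 1 + e 2 ≠ 0) (by simpa only [add_assoc] using hsum')).const_mul
      (8 * ∑' z, x z ^ (e 0 + 1 + e 1 + e 2))
  rw [mul_zero] at hlim
  refine squeeze_zero (fun n => ?_) (fun n => ?_) hlim
  · refine div_nonneg (Finset.sum_nonneg fun i _ => Finset.sum_nonneg fun j _ =>
      Finset.sum_nonneg fun k _ => Finset.sum_nonneg fun l _ => ?_) (by positivity)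
    exact mul_nonneg (mul_nonneg (hx _) (hx _))
      (pairingProd_nonneg (fun i j : Fin n => hx (i - j)) e i j k l)
  · rcases n.eq_zero_or_pos with rfl | hn
    · simp
    rw [mul_div_assoc', div_le_div_iff₀ (by positivity) (by positivity)]
    calc _ ≤ _ := mul_le_mul_of_nonneg_right (sum_pairingProd_le hx e hsum' n) n.cast_nonneg
      _ = _ := by ring

lemma sum_sum_fin_sub (y : ℤ → ℝ) (n : ℕ) :
    ∑ i : Fin n, ∑ j : Fin n, y (i - j) =
      ∑ m ∈ Finset.range n, ∑ z ∈ Finset.Ioo (-(m + 1) : ℤ) (m + 1), y z := by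
  induction n with
  | zero => simp
  | succ n ih =>
    have hcol : ∑ i : Fin n, y (i - n) = ∑ z ∈ Finset.Ioo (-(n + 1) : ℤ) 0, y z :=
      Finset.sum_nbij (fun i => (i : ℤ) - n) (fun i _ => Finset.mem_Ioo.2 (by omega))
        (injective_fin_sub n n).injOn (fun z hz => by
          have := Finset.mem_Ioo.1 hz
          exact ⟨⟨(z + n).toNat, by omega⟩, Finset.mem_univ _, by simp; omega⟩) fun _ _ => rfl
    have hrow : ∑ j : Fin n, y (n - j) = ∑ z ∈ Finset.Ioo 0 (n + 1 : ℤ), y z :=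
      Finset.sum_nbij (fun j => (n : ℤ) - j) (fun i _ => Finset.mem_Ioo.2 (by omega))
        (fun i _ j _ h => Fin.ext (by simpa using h)) (fun z hz => by
          have := Finset.mem_Ioo.1 hz
          exact ⟨⟨(n - z).toNat, by omega⟩, Finset.mem_univ _, by simp; omega⟩) fun _ _ => rfl
    have hsplit : ∑ z ∈ Finset.Ioo (-(n + 1) : ℤ) (n + 1), y z =
        ∑ z ∈ Finset.Ioo (-(n + 1) : ℤ) 0, y z + (y 0 + ∑ z ∈ Finset.Ioo 0 (n + 1 : ℤ), y z) := by
      rw [← Finset.sum_insert Finset.left_notMem_Ioo, ← Finset.sum_union]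
      · congr 1
        ext z
        simp only [Finset.mem_union, Finset.mem_insert, Finset.mem_Ioo]
        omega
      · simp only [Finset.disjoint_left, Finset.mem_insert, Finset.mem_Ioo]
        omega
    rw [Finset.sum_range_succ, ← ih, hsplit, ← hcol, ← hrow]
    simp only [Fin.sum_univ_castSucc, Fin.val_castSucc, Fin.val_last, Finset.sum_add_distrib,
      sub_self]
    ring

theorem tendsto_sum_sum_fin_sub_div {y : ℤ → ℝ} (hsum : Summable y) :
    Tendsto (fun n : ℕ => (∑ i : Fin n, ∑ j : Fin n, y (i - j)) / n) atTop (𝓝 (∑' z, y z)) := by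
  have hIoo : Tendsto (fun n : ℕ => ∑ z ∈ Finset.Ioo (-(n + 1) : ℤ) (n + 1), y z) atTop
      (𝓝 (∑' z, y z)) := by
    refine hsum.hasSum.comp (tendsto_atTop_finset_of_monotone ?_ fun z => ?_)
    · exact fun m n h => Finset.Ioo_subset_Ioo (by omega) (by omega)
    · exact ⟨z.natAbs, Finset.mem_Ioo.2 (by omega)⟩
  simpa only [sum_sum_fin_sub, inv_mul_eq_div] using hIoo.cesaro

end StationaryArrays

section CentralLimitTheorem

variable {Ω : Type*} [MeasurableSpace Ω] {P : Measure Ω} [IsProbabilityMeasure P]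
  {X : ∀ n : ℕ, Fin n → Ω → ℝ} {ρ : ℤ → ℝ}

lemma tendsto_variance_hermiteSumKernel
    (hX : ∀ n, IsStandardGaussianFamily (X n) (fun i j : Fin n => ρ (i - j)) P) {p : ℕ}
    (hρ : Summable fun z => |ρ z| ^ (p + 1)) :
    Tendsto (fun n : ℕ => Var[fun ω => (√n)⁻¹ ^ 2 *
      hermiteSumKernel (X n) (fun i j : Fin n => ρ (i - j)) p ω; P]) atTop (𝓝 0) := by
  obtain ⟨C, -, hC⟩ := exists_variance_hermiteSumKernel_le P p
  have hlim := (tendsto_finsetSum (crossingPairings p) fun e he =>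
    tendsto_sum_pairingProd_div_sq (fun z => abs_nonneg (ρ z)) hρ he).const_mul C
  simp only [Finset.sum_const_zero, mul_zero] at hlim
  refine squeeze_zero (fun n => variance_nonneg _ _) (fun n => ?_) hlim
  rw [variance_const_mul, inv_pow, Real.sq_sqrt n.cast_nonneg, inv_pow, inv_mul_eq_div,
    ← Finset.sum_div, mul_div_assoc']
  gcongr
  exact hC (hX n)

theorem tendsto_charFun_map_hermiteSum
    (hX : ∀ n, IsStandardGaussianFamily (X n) (fun i j : Fin n => ρ (i - j)) P) {p : ℕ}
    (hρ : Summable fun z => |ρ z| ^ (p + 1)) (t : ℝ) :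
    Tendsto (fun n : ℕ => charFun (P.map fun ω => (√n)⁻¹ * hermiteSum (X n) (p + 1) ω) t) atTop
      (𝓝 (Complex.exp (-(((p + 1).factorial * ∑' z, ρ z ^ (p + 1) : ℝ) * t ^ 2 / 2)))) := by
  have hρ' : Summable fun z => ρ z ^ (p + 1) :=
    .of_norm (by simpa only [norm_pow, Real.norm_eq_abs] using hρ)
  refine tendsto_charFun_map_of_isSteinKernel
    (fun n => ((hX n).isSteinKernel_hermiteSumKernel p).const_mul (√n)⁻¹)
    (fun n => ((hX n).hasFiniteMoments_hermiteSumKernel p).memLp_two.const_mul _) ?_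
    (tendsto_variance_hermiteSumKernel hX hρ) t
  refine ((tendsto_sum_sum_fin_sub_div hρ').const_mul ((p + 1).factorial : ℝ)).congr fun n => ?_
  rw [integral_const_mul, (hX n).integral_hermiteSumKernel, inv_pow, Real.sq_sqrt n.cast_nonneg]
  ring

end CentralLimitTheorem

section FractionalNoise

theorem exists_secondDifference_eq {f f' f'' : ℝ → ℝ} {a h : ℝ} (hh : 0 < h)
    (hf : ContinuousOn f (Set.Icc a (a + 2 * h)))
    (hf' : ∀ x ∈ Set.Ioo a (a + 2 * h), HasDerivAt f (f' x) x)
    (hf'' : ∀ x ∈ Set.Ioo a (a + 2 * h), HasDerivAt f' (f'' x) x) :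
    ∃ ζ ∈ Set.Ioo a (a + 2 * h), f (a + 2 * h) + f a - 2 * f (a + h) = h ^ 2 * f'' ζ := by
  have hstep {x : ℝ} (hx : x ∈ Set.Icc a (a + h)) : x + h ∈ Set.Icc a (a + 2 * h) := by
    constructor <;> linarith [hx.1, hx.2]
  obtain ⟨ξ, hξ, hslope⟩ := exists_hasDerivAt_eq_slope (fun x => f (x + h) - f x)
    (fun x => f' (x + h) - f' x) (lt_add_of_pos_right a hh)
    ((hf.comp (by fun_prop) fun x hx => hstep hx).sub
      (hf.mono (Set.Icc_subset_Icc_right (by linarith))))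
    fun x hx => ((hf' (x + h) ⟨by linarith [hx.1], by linarith [hx.2]⟩).comp_add_const x h).sub
      (hf' x ⟨hx.1, by linarith [hx.2]⟩)
  have hsub {x : ℝ} (hx : x ∈ Set.Icc ξ (ξ + h)) : x ∈ Set.Ioo a (a + 2 * h) := by
    constructor <;> linarith [hx.1, hx.2, hξ.1, hξ.2]
  obtain ⟨ζ, hζ, hslope'⟩ := exists_hasDerivAt_eq_slope f' f'' (lt_add_of_pos_right ξ hh)
    (fun x hx => (hf'' x (hsub hx)).continuousAt.continuousWithinAt)
    fun x hx => hf'' x (hsub (Set.Ioo_subset_Icc_self hx))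
  refine ⟨ζ, hsub (Set.Ioo_subset_Icc_self hζ), ?_⟩
  rw [add_sub_cancel_left, eq_div_iff hh.ne'] at hslope hslope'
  rw [two_mul h, ← add_assoc]
  linear_combination -h * hslope' - hslope

/-- The autocovariance at lag `z` of fractional Gaussian noise, that is, of the increments over the
unit intervals `[k, k + 1]` of a fractional Brownian motion of Hurst parameter `H`. -/
noncomputable def fractionalNoiseCov (H : ℝ) (z : ℤ) : ℝ :=
  (|(z : ℝ) + 1| ^ (2 * H) + |(z : ℝ) - 1| ^ (2 * H) - 2 * |(z : ℝ)| ^ (2 * H)) / 2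

variable {H : ℝ}

lemma fractionalNoiseCov_zero (hH : H ≠ 0) : fractionalNoiseCov H 0 = 1 := by
  simp [fractionalNoiseCov, hH]

lemma fractionalNoiseCov_neg (H : ℝ) (z : ℤ) :
    fractionalNoiseCov H (-z) = fractionalNoiseCov H z := by
  have h₁ : |-(z : ℝ) + 1| = |(z : ℝ) - 1| := by rw [← abs_neg, neg_add, neg_neg, sub_eq_add_neg]
  have h₂ : |-(z : ℝ) - 1| = |(z : ℝ) + 1| := by rw [← abs_neg, neg_sub', neg_neg, sub_neg_eq_add]
  rw [fractionalNoiseCov, fractionalNoiseCov, Int.cast_neg, h₁, h₂, abs_neg]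
  ring

lemma fractionalNoiseCov_add_one (H : ℝ) (m : ℕ) : fractionalNoiseCov H (m + 1) =
    (((m : ℝ) + 2) ^ (2 * H) + (m : ℝ) ^ (2 * H) - 2 * ((m : ℝ) + 1) ^ (2 * H)) / 2 := by
  have h : ((m : ℤ) + 1 : ℤ) = (m : ℝ) + 1 := by push_cast; rfl
  rw [fractionalNoiseCov, h, add_sub_cancel_right, add_assoc, one_add_one_eq_two,
    abs_of_nonneg (by positivity), abs_of_nonneg (by positivity), abs_of_nonneg (by positivity)]

lemma exists_fractionalNoiseCov_add_one_eq (hH : 0 < H) (m : ℕ) :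
    ∃ ζ : ℝ, m < ζ ∧ fractionalNoiseCov H (m + 1) = H * (2 * H - 1) * ζ ^ (2 * H - 2) := by
  have hne {x : ℝ} (hx : x ∈ Set.Ioo (m : ℝ) (m + 2 * 1)) : x ≠ 0 :=
    (m.cast_nonneg.trans_lt hx.1).ne'
  obtain ⟨ζ, hζ, h⟩ := exists_secondDifference_eq one_pos
    (continuous_id.rpow_const fun _ => Or.inr (by positivity : 0 ≤ 2 * H)).continuousOn
    (fun x hx => Real.hasDerivAt_rpow_const (.inl (hne hx)))
    fun x hx => (Real.hasDerivAt_rpow_const (.inl (hne hx))).const_mul (2 * H)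
  refine ⟨ζ, hζ.1, ?_⟩
  rw [fractionalNoiseCov_add_one]
  simp only [id_eq, mul_one, one_pow, one_mul, sub_sub, one_add_one_eq_two] at h
  linear_combination h / 2

lemma fractionalNoiseCov_add_one_nonneg (hH : 1 / 2 ≤ H) (m : ℕ) :
    0 ≤ fractionalNoiseCov H (m + 1) := by
  obtain ⟨ζ, hζ, h⟩ := exists_fractionalNoiseCov_add_one_eq (by linarith) m
  rw [h]
  exact mul_nonneg (mul_nonneg (by linarith) (by linarith))
    (Real.rpow_nonneg (m.cast_nonneg.trans hζ.le) _)

lemma fractionalNoiseCov_add_one_nonpos (hH : 0 < H) (hH' : H ≤ 1 / 2) (m : ℕ) :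
    fractionalNoiseCov H (m + 1) ≤ 0 := by
  obtain ⟨ζ, hζ, h⟩ := exists_fractionalNoiseCov_add_one_eq hH m
  rw [h]
  exact mul_nonpos_of_nonpos_of_nonneg (mul_nonpos_of_nonneg_of_nonpos hH.le (by linarith))
    (Real.rpow_nonneg (m.cast_nonneg.trans hζ.le) _)

lemma abs_fractionalNoiseCov_add_one_le (hH : 0 < H) (hH1 : H ≤ 1) {m : ℕ} (hm : 0 < m) :
    |fractionalNoiseCov H (m + 1)| ≤ (m : ℝ) ^ (2 * H - 2) := by
  obtain ⟨ζ, hζ, h⟩ := exists_fractionalNoiseCov_add_one_eq hH m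
  have hcoeff : |H * (2 * H - 1)| ≤ 1 := by
    rw [abs_le]
    constructor <;> nlinarith
  have hm' : (0 : ℝ) < m := Nat.cast_pos.2 hm
  have hpow := Real.rpow_nonneg (hm'.trans hζ).le (2 * H - 2)
  calc |fractionalNoiseCov H (m + 1)| = |H * (2 * H - 1)| * ζ ^ (2 * H - 2) := by
        rw [h, abs_mul, abs_of_nonneg hpow]
    _ ≤ ζ ^ (2 * H - 2) := mul_le_of_le_one_left hpow hcoeff
    _ ≤ (m : ℝ) ^ (2 * H - 2) := Real.rpow_le_rpow_of_nonpos hm' hζ.le (by linarith)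

lemma summable_abs_fractionalNoiseCov_pow (hH : 0 < H) (hH1 : H ≤ 1) {q : ℕ}
    (hq : 1 < q * (2 - 2 * H)) : Summable fun z => |fractionalNoiseCov H z| ^ q := by
  have hrpow : Summable fun m : ℕ => (m : ℝ) ^ ((2 * H - 2) * q) := by
    rw [Real.summable_nat_rpow]
    linarith
  have hnat : Summable fun m : ℕ => |fractionalNoiseCov H m| ^ q := by
    rw [← summable_nat_add_iff 2]
    refine .of_nonneg_of_le (fun m => by positivity) (fun m => ?_)
      ((summable_nat_add_iff 1).2 hrpow)
    rw [Real.rpow_mul (Nat.cast_nonneg _), Real.rpow_natCast]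
    gcongr
    simpa [add_assoc, one_add_one_eq_two] using
      abs_fractionalNoiseCov_add_one_le hH hH1 m.succ_pos
  exact hnat.of_nat_of_neg (by simpa only [fractionalNoiseCov_neg] using hnat)

lemma sum_range_fractionalNoiseCov_add_one (hH : H ≠ 0) (n : ℕ) :
    ∑ m ∈ Finset.range n, fractionalNoiseCov H (m + 1) =
      (((n : ℝ) + 1) ^ (2 * H) - (n : ℝ) ^ (2 * H) - 1) / 2 := by
  induction n with
  | zero => simp [hH]
  | succ n ih =>
    rw [Finset.sum_range_succ, ih, fractionalNoiseCov_add_one, Nat.cast_succ, add_assoc _ 1,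
      one_add_one_eq_two]
    ring

lemma sum_range_abs_fractionalNoiseCov_add_one_le (hH : 0 < H) (hH' : H ≤ 1 / 2) (n : ℕ) :
    ∑ m ∈ Finset.range n, |fractionalNoiseCov H (m + 1)| ≤ 1 / 2 := by
  have hmono : (n : ℝ) ^ (2 * H) ≤ ((n : ℝ) + 1) ^ (2 * H) := by gcongr; linarith
  rw [Finset.sum_congr rfl fun m _ => abs_of_nonpos (fractionalNoiseCov_add_one_nonpos hH hH' m),
    Finset.sum_neg_distrib, sum_range_fractionalNoiseCov_add_one hH.ne']
  linarith

lemma tsum_abs_pow_le_pow {u : ℕ → ℝ} {c : ℝ} (hu : ∀ n, ∑ m ∈ Finset.range n, |u m| ≤ c) {q : ℕ}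
    (hq : q ≠ 0) : ∑' m, |u m| ^ q ≤ c ^ q := by
  refine Real.tsum_le_of_sum_range_le (fun m => by positivity) fun n => ?_
  have hc : 0 ≤ c := hu 0
  have hu_le {m : ℕ} (hm : m ∈ Finset.range n) : |u m| ≤ c :=
    (Finset.single_le_sum (fun m _ => abs_nonneg (u m)) hm).trans (hu n)
  calc ∑ m ∈ Finset.range n, |u m| ^ q
      ≤ ∑ m ∈ Finset.range n, c ^ (q - 1) * |u m| := by
        refine Finset.sum_le_sum fun m hm => ?_
        rw [← pow_sub_one_mul hq]
        gcongr
        exact hu_le hm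
    _ ≤ c ^ (q - 1) * c := by
        rw [← Finset.mul_sum]
        gcongr
        exact hu n
    _ = c ^ q := pow_sub_one_mul hq _

/- For `1 / 2 ≤ H` all the terms are nonnegative; for `H ≤ 1 / 2` the covariances at nonzero lags
telescope to `-1`, so their `q`-th powers cannot compensate the term at lag zero. -/
theorem tsum_fractionalNoiseCov_pow_pos (hH : 0 < H) {q : ℕ} (hq : 2 ≤ q)
    (hsum : Summable fun z => |fractionalNoiseCov H z| ^ q) :
    0 < ∑' z, fractionalNoiseCov H z ^ q := by
  have habs : Summable fun m : ℕ => |fractionalNoiseCov H (m + 1)| ^ q :=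
    hsum.comp_injective (i := fun m : ℕ => (m : ℤ) + 1) fun a b h => by simpa using h
  have hpos : Summable fun m : ℕ => fractionalNoiseCov H (m + 1) ^ q :=
    .of_norm (by simpa only [norm_pow, Real.norm_eq_abs] using habs)
  have hneg : Summable fun m : ℕ => fractionalNoiseCov H (-(m + 1)) ^ q := by
    simpa only [fractionalNoiseCov_neg] using hpos
  rw [tsum_of_add_one_of_neg_add_one (f := fun z => fractionalNoiseCov H z ^ q) hpos hneg]
  simp only [fractionalNoiseCov_neg, fractionalNoiseCov_zero hH.ne', one_pow]
  suffices h : -(1 / 4) ≤ ∑' m : ℕ, fractionalNoiseCov H (m + 1) ^ q by linarith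
  rcases le_total (1 / 2) H with hH' | hH'
  · have : 0 ≤ ∑' m : ℕ, fractionalNoiseCov H (m + 1) ^ q :=
      tsum_nonneg fun m => pow_nonneg (fractionalNoiseCov_add_one_nonneg hH' m) q
    linarith
  · calc -(1 / 4 : ℝ) ≤ -(1 / 2) ^ q := by
          have : (1 / 2 : ℝ) ^ q ≤ (1 / 2) ^ 2 :=
            pow_le_pow_of_le_one (by norm_num) (by norm_num) hq
          linarith
      _ ≤ -∑' m : ℕ, |fractionalNoiseCov H (m + 1)| ^ q := neg_le_neg <|
          tsum_abs_pow_le_pow (sum_range_abs_fractionalNoiseCov_add_one_le hH hH') (by omega)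
      _ ≤ ∑' m : ℕ, fractionalNoiseCov H (m + 1) ^ q := by
          rw [← tsum_neg]
          refine habs.neg.tsum_le_tsum (fun m => ?_) hpos
          rw [← abs_pow]
          exact neg_abs_le _

end FractionalNoise

/-- The increment of `B` over the `k`-th of the `n` intervals of length `1 / n`, normalized by
`n ^ H` to unit variance when `B` is a fractional Brownian motion of Hurst parameter `H`. -/
noncomputable def normalizedIncrement {Ω : Type*} (B : ℝ → Ω → ℝ) (H : ℝ) (n : ℕ) (k : Fin n)
    (ω : Ω) : ℝ :=
  (n : ℝ) ^ H * (B ((k + 1) / n) ω - B (k / n) ω)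

lemma natCast_rpow_mul_abs_div_sub_div_rpow {n : ℕ} (hn : n ≠ 0) (α a b : ℝ) :
    (n : ℝ) ^ α * |a / n - b / n| ^ α = |a - b| ^ α := by
  rw [← Real.mul_rpow n.cast_nonneg (abs_nonneg _), ← Nat.abs_cast n, ← abs_mul, Nat.abs_cast,
    ← sub_div, mul_div_cancel₀ _ (Nat.cast_ne_zero.2 hn)]

lemma hermiteVariation_eq_hermiteSum {Ω : Type*} [MeasureSpace Ω] (B : ℝ → Ω → ℝ) (H : ℝ)
    (q n : ℕ) : hermiteVariation B H q n = hermiteSum (normalizedIncrement B H n) q := by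
  ext ω
  exact Finset.sum_range _

theorem tendstoInDistribution_div_sqrt_of_tendsto_charFun {Ω : Type*} [MeasureSpace Ω]
    [IsProbabilityMeasure (ℙ : Measure Ω)] {W : ℕ → Ω → ℝ} (hW : ∀ n, AEMeasurable (W n))
    {v : ℝ} (hv : 0 < v)
    (h : ∀ t : ℝ, Tendsto (fun n => charFun ((ℙ : Measure Ω).map (W n)) t) atTop
      (𝓝 (Complex.exp (-(v * t ^ 2 / 2))))) :
    _root_.TendstoInDistribution (fun n ω => W n ω / √v) (gaussianReal 0 1) := by
  have hW' (n : ℕ) : AEMeasurable (fun ω => W n ω / √v) := (hW n).div_const _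
  let μ (n : ℕ) : ProbabilityMeasure ℝ :=
    ⟨(ℙ : Measure Ω).map fun ω => W n ω / √v, Measure.isProbabilityMeasure_map (hW' n)⟩
  let μ₀ : ProbabilityMeasure ℝ := ⟨gaussianReal 0 1, inferInstance⟩
  have hμ : Tendsto μ atTop (𝓝 μ₀) := by
    rw [ProbabilityMeasure.tendsto_iff_tendsto_charFun]
    intro t
    have hexp : Complex.exp (-(v * ((√v)⁻¹ * t : ℝ) ^ 2 / 2)) = charFun (gaussianReal 0 1) t := by
      rw [charFun_gaussianReal, ← Complex.ofReal_pow, mul_pow, inv_pow, Real.sq_sqrt hv.le,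
        ← Complex.ofReal_mul, mul_inv_cancel_left₀ hv.ne']
      simp
    refine hexp ▸ (h ((√v)⁻¹ * t)).congr fun n => ?_
    simp_rw [← charFun_map_mul_comp (hW n), inv_mul_eq_div]
    rfl
  intro f
  refine (ProbabilityMeasure.tendsto_iff_forall_integral_tendsto.1 hμ f).congr fun n => ?_
  exact integral_map (hW' n) f.continuous.aestronglyMeasurable

end BreuerMajor

open BreuerMajor

namespace IsFractionalBrownianMotion

variable {Ω : Type*} [MeasureSpace Ω] {B : ℝ → Ω → ℝ} {H : ℝ}

lemma hasGaussianLaw_pi (hB : IsFractionalBrownianMotion B H) {n : ℕ} {t : Fin n → ℝ}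
    (ht : ∀ i, 0 ≤ t i) : HasGaussianLaw (fun ω i => B (t i) ω) ℙ where
  isGaussian_map := by
    refine isGaussian_of_map_eq_gaussianReal fun L => ?_
    obtain ⟨v, hv⟩ := hB.gaussian_fdd n t ht fun i => L (Pi.single i 1)
    refine ⟨0, v, ?_⟩
    rw [Measure.map_map L.continuous.measurable
      (measurable_pi_lambda _ fun i => hB.measurable (t i)), ← hv]
    congr 1 with ω
    rw [Function.comp_apply, ← Finset.univ_sum_single fun i => B (t i) ω, map_sum]
    refine Finset.sum_congr rfl fun i _ => ?_
    rw [mul_comm, ← smul_eq_mul, ← map_smul, ← Pi.single_smul, smul_eq_mul, mul_one]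

lemma map_eq_gaussianReal (hB : IsFractionalBrownianMotion B H) {t : ℝ} (ht : 0 ≤ t) :
    ∃ v : NNReal, (ℙ : Measure Ω).map (B t) = gaussianReal 0 v := by
  simpa using hB.gaussian_fdd 1 (fun _ => t) (fun _ => ht) fun _ => 1

lemma memLp_two (hB : IsFractionalBrownianMotion B H) {t : ℝ} (ht : 0 ≤ t) : MemLp (B t) 2 :=
  ((hB.hasGaussianLaw_pi fun _ : Fin 1 => ht).eval 0).memLp_two

lemma integral_eq_zero (hB : IsFractionalBrownianMotion B H) {t : ℝ} (ht : 0 ≤ t) :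
    ∫ ω, B t ω = 0 := by
  obtain ⟨v, hv⟩ := hB.map_eq_gaussianReal ht
  have h : ∫ x, x ∂(ℙ : Measure Ω).map (B t) = 0 := by rw [hv, integral_id_gaussianReal]
  rwa [integral_map (hB.measurable t).aemeasurable (by fun_prop)] at h

lemma hasGaussianLaw_normalizedIncrement (hB : IsFractionalBrownianMotion B H) (n : ℕ) :
    HasGaussianLaw (fun ω k => normalizedIncrement B H n k ω) ℙ := by
  let L : (Fin (n + 1) → ℝ) →L[ℝ] (Fin n → ℝ) :=
    .pi fun k => (n : ℝ) ^ H • (.proj k.succ - .proj k.castSucc)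
  have hgrid (i : Fin (n + 1)) : 0 ≤ (i : ℝ) / n := by positivity
  refine ((hB.hasGaussianLaw_pi hgrid).map_fun L).congr (.of_forall fun ω => ?_)
  ext k
  simp [L, normalizedIncrement]

lemma measurable_hermiteVariation (hB : IsFractionalBrownianMotion B H) (q n : ℕ) :
    Measurable (hermiteVariation B H q n) :=
  Finset.measurable_fun_sum _ fun _ _ => (continuous_hermiteFun q).measurable.comp
    (((hB.measurable _).sub (hB.measurable _)).const_mul _)

variable [IsProbabilityMeasure (ℙ : Measure Ω)]

lemma covariance_apply (hB : IsFractionalBrownianMotion B H) {s t : ℝ} (hs : 0 ≤ s) (ht : 0 ≤ t) :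
    cov[B s, B t] = (s ^ (2 * H) + t ^ (2 * H) - |t - s| ^ (2 * H)) / 2 := by
  rw [covariance_eq_sub (hB.memLp_two hs) (hB.memLp_two ht), hB.integral_eq_zero hs, zero_mul,
    sub_zero]
  exact hB.covariance s t hs ht

lemma covariance_increments (hB : IsFractionalBrownianMotion B H) {s t u w : ℝ} (hs : 0 ≤ s)
    (ht : 0 ≤ t) (hu : 0 ≤ u) (hw : 0 ≤ w) :
    cov[fun ω => B t ω - B s ω, fun ω => B w ω - B u ω] =
      (|w - s| ^ (2 * H) + |u - t| ^ (2 * H) - |w - t| ^ (2 * H) - |u - s| ^ (2 * H)) / 2 := by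
  rw [covariance_fun_sub_fun_sub (hB.memLp_two ht) (hB.memLp_two hs) (hB.memLp_two hw)
    (hB.memLp_two hu), hB.covariance_apply ht hw, hB.covariance_apply ht hu,
    hB.covariance_apply hs hw, hB.covariance_apply hs hu]
  ring

lemma covariance_normalizedIncrement (hB : IsFractionalBrownianMotion B H) {n : ℕ} (i j : Fin n) :
    cov[normalizedIncrement B H n i, normalizedIncrement B H n j] =
      fractionalNoiseCov H (i - j) := by
  have hn : n ≠ 0 := i.pos.ne'
  have hn' : (0 : ℝ) < n := Nat.cast_pos.2 i.pos
  have h₁ : (j : ℝ) + 1 - i = j - i + 1 := by ring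
  have h₂ : (j : ℝ) - (i + 1) = j - i - 1 := by ring
  unfold normalizedIncrement
  rw [covariance_const_mul_left, covariance_const_mul_right,
    hB.covariance_increments (by positivity) (by positivity) (by positivity) (by positivity),
    ← mul_assoc, ← Real.rpow_add hn', ← two_mul, mul_div_assoc', mul_sub, mul_sub, mul_add,
    ← fractionalNoiseCov_neg, neg_sub, fractionalNoiseCov]
  simp only [natCast_rpow_mul_abs_div_sub_div_rpow hn, add_sub_add_right_eq_sub, h₁, h₂]
  push_cast
  ring

theorem isStandardGaussianFamily_normalizedIncrement (hB : IsFractionalBrownianMotion B H)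
    (hH : H ≠ 0) (n : ℕ) : IsStandardGaussianFamily (normalizedIncrement B H n)
      (fun i j : Fin n => fractionalNoiseCov H (i - j)) ℙ where
  hasGaussianLaw := hB.hasGaussianLaw_normalizedIncrement n
  integral_eq_zero i := by
    have hint {t : ℝ} (ht : 0 ≤ t) : Integrable (B t) := (hB.memLp_two ht).integrable one_le_two
    have h₀ : 0 ≤ (i : ℝ) / n := by positivity
    have h₁ : 0 ≤ ((i : ℝ) + 1) / n := by positivity
    unfold normalizedIncrement
    rw [integral_const_mul, integral_sub (hint h₁) (hint h₀), hB.integral_eq_zero h₁,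
      hB.integral_eq_zero h₀, sub_zero, mul_zero]
  covariance_eq i j := hB.covariance_normalizedIncrement i j
  self_eq_one i := by rw [sub_self, fractionalNoiseCov_zero hH]

end IsFractionalBrownianMotion

theorem stmt_0 {Ω : Type*} [MeasureSpace Ω] [IsProbabilityMeasure (ℙ : Measure Ω)]
    (q : ℕ) (hq : 2 ≤ q) (H : ℝ) (hH0 : 0 < H) (hH1 : H < 1 - 1 / (2 * q))
    (B : ℝ → Ω → ℝ) (hB : IsFractionalBrownianMotion B H) :
    ∃ c : ℝ, 0 < c ∧
      TendstoInDistribution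
        (fun n ω => hermiteVariation B H q n ω / (c * Real.sqrt n))
        (gaussianReal 0 1) := by
  have hq0 : (0 : ℝ) < 2 * q := by positivity
  have hH1' : H ≤ 1 := hH1.le.trans (sub_le_self 1 (by positivity))
  have hqH : 1 < q * (2 - 2 * H) := by
    rw [lt_sub_comm, div_lt_iff₀ hq0] at hH1
    linarith
  have hsum := summable_abs_fractionalNoiseCov_pow hH0 hH1' hqH
  have hv : 0 < q.factorial * ∑' z, fractionalNoiseCov H z ^ q :=
    mul_pos (by positivity) (tsum_fractionalNoiseCov_pow_pos hH0 hq hsum)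
  obtain ⟨p, rfl⟩ := Nat.exists_eq_add_one_of_ne_zero (two_pos.trans_le hq).ne'
  refine ⟨_, Real.sqrt_pos.2 hv, ?_⟩
  have hlim := tendsto_charFun_map_hermiteSum
    (hB.isStandardGaussianFamily_normalizedIncrement hH0.ne') hsum
  simp only [← hermiteVariation_eq_hermiteSum] at hlim
  have hmeas (n : ℕ) := (hB.measurable_hermiteVariation (p + 1) n).const_mul (√n)⁻¹
  convert tendstoInDistribution_div_sqrt_of_tendsto_charFun (fun n => (hmeas n).aemeasurable) hv
    hlim using 3
  rw [inv_mul_eq_div, div_div, mul_comm]
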